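/- arXiv:2506.07991 — 2 statements merged into one kernel-verified Lean document; each statement's English description precedes it below -/
import Mathlib

section
/- Let Γ be a finitely generated solvable group. Then Γ has finite abelian ranks if and only if Γ is minimax. -/
/-!
That a solvable minimax group has finite abelian ranks is seen by refining the given series with
the derived series of its factors: an abelian group with Max is finitely generated and an abelian
group with Min is torsion with finite layers (`IsMinimax.isFARGroup`).

For the converse, an abelian group `Y` of finite abelian ranks is an extension of a finitely
generated group `L` by a torsion group which is *thin*, that is, has only finitely many elements of
each order (`HasFiniteRanks.hasThinRank`); `Y` is minimax exactly when, for a suitable `L`, only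
finitely many primes occur in `Y / L`. One descends along the derived series of `G`, joining
`derivedSeries G i` to `G` by cyclic factors and divisible `r`-primary factors, called *good*
below, for some `r > 0`. In the step from `A` to `K = [A, A]`, let `Y = A / K`. As `G` is
finitely generated, `r` can be enlarged so that the elements of `Y` with some `r ^ k`-th power
in `L` form a `G`-invariant subgroup `P` (`exists_invariant_primaryClosure`). The torsion module
`V = Y / P` has finite layers and no `r`-torsion, and the claim is that `V` is finite.

The quotient map `δ₀ : A → V` is equivariant, and the main point is that some positive multiple of
it extends to a derivation (crossed homomorphism) `G → V` (`multipleExtends_of_chain`).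
A derivation on a finitely generated group with values in a torsion module has finite exponent; so
`V` has finite exponent and, its layers being finite, is finite (`finite_of_chain`). Then `Y` is an
extension of finitely generated groups, finite groups and a divisible `r`-primary group, which are
chains of good factors.

The extension is made along the good series from `A` to `G`, keeping track of the fact that a
derivation vanishing on `A` is determined by its values on a finite set. If `d` extends `n • δ₀` to
`K`, then for `g` in the next term `H` the difference of `d` and its conjugate by `g` vanishes on
`A`. For `H / K` generated by `g`, finite determination shows that a multiple of this difference
is zero, so a multiple of `d` is invariant under `g` and is extended by zero on `g`, after a further
multiple if a power of `g` lies in `K` (`MultipleExtends.cyclic`). For `H / K` divisible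
and `r`-primary, finite determination shows that the difference has finitely many conjugates, hence
is unchanged by `H` up to inner derivations; since `r` acts invertibly on `V`, the difference is
itself inner (`isInnerOn_conjAct_sub`). The obstruction to extending `d` to `H` is then a central
extension of an `r`-primary abelian group by a group on which `r` acts invertibly, and this splits
canonically (`exists_extension_of_divisible`).
-/

/-- The pair of subgroups `K ≤ H` of `G` forms an *abelian factor of finite ranks*:
`K` is normal in `H`, the factor `H/K` is abelian, has finite torsion-free rank
(some `n` bounds the size of any independent family modulo `K`), and for every prime `p`
the `p`-torsion of `H/K` is finite (it is covered by finitely many cosets of `K`). -/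
def IsFARFactor {G : Type*} [Group G] (K H : Subgroup G) : Prop :=
  K ≤ H ∧
  (∀ x ∈ H, ∀ y ∈ K, x * y * x⁻¹ ∈ K) ∧
  (∀ x ∈ H, ∀ y ∈ H, x * y * x⁻¹ * y⁻¹ ∈ K) ∧
  (∃ n : ℕ, ∀ f : Fin (n + 1) → G, (∀ i, f i ∈ H) →
    ∃ c : Fin (n + 1) → ℤ, c ≠ 0 ∧ (List.ofFn fun i => f i ^ c i).prod ∈ K) ∧
  (∀ p : ℕ, p.Prime → ∃ F : Finset G, ∀ x ∈ H, x ^ p ∈ K → ∃ b ∈ F, b⁻¹ * x ∈ K)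

/-- A group has *finite abelian ranks* (is a FAR-group) if it admits a finite normal
series whose factors are abelian groups of finite torsion-free rank and finite `p`-rank
for every prime `p`. -/
def IsFARGroup (G : Type*) [Group G] : Prop :=
  ∃ (n : ℕ) (s : Fin (n + 1) → Subgroup G),
    s 0 = ⊥ ∧ s (Fin.last n) = ⊤ ∧ ∀ i : Fin n, IsFARFactor (s i.castSucc) (s i.succ)

/-- A group is virtually FAR if it has a finite-index subgroup which is a FAR-group. -/
def IsVirtuallyFAR (G : Type*) [Group G] : Prop :=
  ∃ H : Subgroup G, H.FiniteIndex ∧ IsFARGroup H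

/-- A group is *minimax* if it has a finite normal series each of whose factors
satisfies the maximal condition Max (no infinite strictly ascending chain of
subgroups of the factor, i.e. of intermediate subgroups) or the minimal condition
Min (no infinite strictly descending chain). -/
def IsMinimax (G : Type*) [Group G] : Prop :=
  ∃ (n : ℕ) (s : Fin (n + 1) → Subgroup G),
    s 0 = ⊥ ∧ s (Fin.last n) = ⊤ ∧
    ∀ i : Fin n, s i.castSucc ≤ s i.succ ∧
      (∀ x ∈ s i.succ, ∀ y ∈ s i.castSucc, x * y * x⁻¹ ∈ s i.castSucc) ∧
      ((¬∃ f : ℕ → Subgroup G,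
          (∀ m, s i.castSucc ≤ f m ∧ f m ≤ s i.succ) ∧ StrictMono f) ∨
       (¬∃ f : ℕ → Subgroup G,
          (∀ m, s i.castSucc ≤ f m ∧ f m ≤ s i.succ) ∧ StrictAnti f))

/-! ### Series as chains of a relation -/

theorem exists_series_iff {α : Type*} (R : α → α → Prop) (a b : α) :
    (∃ (n : ℕ) (s : Fin (n + 1) → α), s 0 = a ∧ s (Fin.last n) = b ∧
      ∀ i : Fin n, R (s i.castSucc) (s i.succ)) ↔ Relation.ReflTransGen R a b := by
  constructor
  · rintro ⟨n, s, rfl, rfl, h⟩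
    have : ∀ i : Fin (n + 1), Relation.ReflTransGen R (s 0) (s i) := by
      intro i
      induction i using Fin.induction with
      | zero => exact .refl
      | succ i ih => exact ih.tail (h i)
    exact this _
  · intro h
    induction h with
    | refl => exact ⟨0, fun _ => a, rfl, rfl, fun i => i.elim0⟩
    | @tail b c _ hbc ih =>
      obtain ⟨n, s, h0, h1, h2⟩ := ih
      refine ⟨n + 1, Fin.snoc s c, ?_, ?_, ?_⟩
      · rw [← Fin.castSucc_zero, Fin.snoc_castSucc, h0]
      · simp
      · intro i
        rw [Fin.snoc_castSucc]
        induction i using Fin.lastCases with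
        | last => simpa [h1] using hbc
        | cast i =>
          rw [Fin.succ_castSucc, Fin.snoc_castSucc]
          exact h2 i

/-- A factor `H / K` of a minimax series: `K` is normal in `H`, and the interval of subgroups
between `K` and `H` satisfies the ascending or the descending chain condition. -/
def IsMinimaxFactor {G : Type*} [Group G] (K H : Subgroup G) : Prop :=
  K ≤ H ∧ (∀ x ∈ H, ∀ y ∈ K, x * y * x⁻¹ ∈ K) ∧
    ((¬∃ f : ℕ → Subgroup G, (∀ m, K ≤ f m ∧ f m ≤ H) ∧ StrictMono f) ∨
      (¬∃ f : ℕ → Subgroup G, (∀ m, K ≤ f m ∧ f m ≤ H) ∧ StrictAnti f))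

theorem isFARGroup_iff_chain (G : Type*) [Group G] :
    IsFARGroup G ↔ Relation.ReflTransGen (IsFARFactor (G := G)) ⊥ ⊤ :=
  exists_series_iff _ _ _

theorem isMinimax_iff_chain (G : Type*) [Group G] :
    IsMinimax G ↔ Relation.ReflTransGen (IsMinimaxFactor (G := G)) ⊥ ⊤ :=
  exists_series_iff IsMinimaxFactor ⊥ ⊤

/-! ### Torsion abelian groups with finite torsion layers -/

/-- A torsion abelian group having finitely many elements of each order. -/
def IsThinTorsion (T : Type*) [CommGroup T] : Prop :=
  (∀ x : T, ∃ n : ℕ, 0 < n ∧ x ^ n = 1) ∧ ∀ n : ℕ, 0 < n → {x : T | x ^ n = 1}.Finite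

theorem IsThinTorsion.of_injective {T T' : Type*} [CommGroup T] [CommGroup T'] (f : T →* T')
    (hf : Function.Injective f) (h : IsThinTorsion T') : IsThinTorsion T := by
  refine ⟨fun x => ?_, fun n hn => ?_⟩
  · obtain ⟨n, hn, hx⟩ := h.1 (f x)
    exact ⟨n, hn, hf (by simpa using hx)⟩
  · refine Set.Finite.of_finite_image ((h.2 n hn).subset ?_) hf.injOn
    rintro _ ⟨x, hx, rfl⟩
    simp only [Set.mem_ofPred_eq] at hx ⊢
    rw [← map_pow, hx, map_one]

theorem card_torsion_eq_index {J : Type*} [CommGroup J] [Finite J] (n : ℕ) :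
    Nat.card (powMonoidHom n : J →* J).ker = (powMonoidHom n : J →* J).range.index := by
  have h2 := Subgroup.card_mul_index (powMonoidHom n : J →* J).range
  have h1 := Subgroup.card_mul_index (powMonoidHom n : J →* J).ker
  rw [Subgroup.index_ker] at h1
  have h3 : 0 < Nat.card (powMonoidHom n : J →* J).range := Nat.card_pos
  refine Nat.eq_of_mul_eq_mul_left h3 ?_
  rw [h2, mul_comm, h1]

/-- In a finite abelian group `J` the `n`-torsion has as many elements as `J / nJ`, and the
latter can only shrink in a quotient. -/
theorem card_torsion_le_of_surjective {J J' : Type*} [CommGroup J] [CommGroup J'] [Finite J]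
    (f : J →* J') (hf : Function.Surjective f) (n : ℕ) :
    Nat.card (powMonoidHom n : J' →* J').ker ≤ Nat.card (powMonoidHom n : J →* J).ker := by
  have : Finite J' := Finite.of_surjective f hf
  rw [card_torsion_eq_index, card_torsion_eq_index]
  have hm : (powMonoidHom n : J →* J).range.map f = (powMonoidHom n : J' →* J').range := by
    ext y
    constructor
    · rintro ⟨_, ⟨x, rfl⟩, rfl⟩
      exact ⟨f x, by simp⟩
    · rintro ⟨y, rfl⟩
      obtain ⟨x, rfl⟩ := hf y
      exact ⟨_, ⟨x, rfl⟩, by simp⟩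
  rw [← hm]
  exact Nat.le_of_dvd (Nat.pos_of_ne_zero Subgroup.index_ne_zero_of_finite)
    (Subgroup.index_map_dvd _ hf)

theorem IsThinTorsion.of_surjective {T T' : Type*} [CommGroup T] [CommGroup T'] (f : T →* T')
    (hf : Function.Surjective f) (h : IsThinTorsion T) : IsThinTorsion T' := by
  classical
  refine ⟨fun y => ?_, fun n hn => ?_⟩
  · obtain ⟨x, rfl⟩ := hf y
    obtain ⟨n, hn, hx⟩ := h.1 x
    exact ⟨n, hn, by rw [← map_pow, hx, map_one]⟩
  · by_contra hinf
    obtain ⟨t, ht, hcard⟩ := Set.Infinite.exists_subset_card_eq hinf ((h.2 n hn).toFinset.card + 1)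
    choose g hg using hf
    let J : Subgroup T := Subgroup.closure (t.image g : Finset T)
    have hJfg : Group.FG J := (Group.fg_iff_subgroup_fg J).2 ⟨t.image g, rfl⟩
    have hJtor : IsMulTorsion J := by
      intro x
      obtain ⟨m, hm, hx⟩ := h.1 x
      exact isOfFinOrder_iff_pow_eq_one.2 ⟨m, hm, Subtype.ext (by simpa using hx)⟩
    have hJ : Finite J := CommGroup.finite_of_fg_isMulTorsion J hJtor
    have key := card_torsion_le_of_surjective (f.subgroupMap J) (f.subgroupMap_surjective J) n
    have h1 : Nat.card (powMonoidHom n : J →* J).ker ≤ (h.2 n hn).toFinset.card := by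
      have := (h.2 n hn).to_subtype
      have := Nat.card_le_card_of_injective
        (fun x : (powMonoidHom n : J →* J).ker =>
          (⟨x.1.1, by
            have := x.2
            rw [MonoidHom.mem_ker] at this
            simpa using congrArg Subtype.val this⟩ : {x : T | x ^ n = 1}))
        (fun a b hab => Subtype.ext (Subtype.ext (by simpa using hab)))
      rwa [Nat.card_coe_set_eq, Set.ncard_eq_toFinset_card _ (h.2 n hn)] at this
    have : Finite (J.map f) := Finite.of_surjective _ (f.subgroupMap_surjective J)
    have h2 : t.card ≤ Nat.card (powMonoidHom n : J.map f →* J.map f).ker := by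
      have := Nat.card_le_card_of_injective
        (fun y : t => (⟨⟨y.1, g y.1, Subgroup.subset_closure
            (by simpa using ⟨y.1, y.2, rfl⟩), hg _⟩, by
            rw [MonoidHom.mem_ker]
            exact Subtype.ext (ht y.2)⟩ : (powMonoidHom n : J.map f →* J.map f).ker))
        (fun a b hab => by
          have := congrArg (fun z => z.1.1) hab
          exact Subtype.ext this)
      simpa using this
    omega

theorem IsThinTorsion.of_extension {T : Type*} [CommGroup T] (U : Subgroup T)
    (hU : IsThinTorsion U) (hQ : IsThinTorsion (T ⧸ U)) : IsThinTorsion T := by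
  refine ⟨fun x => ?_, fun n hn => ?_⟩
  · obtain ⟨n, hn, hx⟩ := hQ.1 (x : T ⧸ U)
    rw [← QuotientGroup.mk_pow, QuotientGroup.eq_one_iff] at hx
    obtain ⟨m, hm, hx'⟩ := hU.1 ⟨_, hx⟩
    exact ⟨n * m, Nat.mul_pos hn hm, by rw [pow_mul]; simpa using congrArg Subtype.val hx'⟩
  · refine Set.Finite.of_finite_fibers (QuotientGroup.mk' U) ((hQ.2 n hn).subset ?_) ?_
    · rintro _ ⟨x, hx, rfl⟩
      simp only [Set.mem_ofPred_eq] at hx ⊢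
      rw [← map_pow, hx, map_one]
    · rintro _ ⟨x, hx, rfl⟩
      refine Set.Finite.subset (((hU.2 n hn).image Subtype.val).image (fun u => x * u)) ?_
      rintro y ⟨hy, hyx⟩
      have hmem : x⁻¹ * y ∈ U := QuotientGroup.eq.1 (Eq.symm hyx)
      refine ⟨x⁻¹ * y, ⟨⟨_, hmem⟩, ?_, rfl⟩, by simp⟩
      simp only [Set.mem_ofPred_eq] at hx hy ⊢
      exact Subtype.ext (by simp [mul_pow, hx, hy])

theorem Subgroup.FG.map_hom {X Y : Type*} [Group X] [Group Y] {L : Subgroup X} (hL : L.FG)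
    (f : X →* Y) : (L.map f).FG := by
  rw [← Group.fg_iff_subgroup_fg] at hL ⊢
  exact Group.fg_of_surjective (f.subgroupMap_surjective L)

/-- An abelian group has *thin rank* if some finitely generated subgroup has a thin torsion
quotient; this is equivalent to having finite torsion-free rank and finite `p`-ranks. -/
def HasThinRank (Y : Type*) [CommGroup Y] : Prop :=
  ∃ L : Subgroup Y, L.FG ∧ IsThinTorsion (Y ⧸ L)

theorem HasThinRank.of_surjective {Y Y' : Type*} [CommGroup Y] [CommGroup Y'] (f : Y →* Y')
    (hf : Function.Surjective f) (h : HasThinRank Y) : HasThinRank Y' := by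
  obtain ⟨L, hL, hT⟩ := h
  refine ⟨L.map f, hL.map_hom f, hT.of_surjective
    (QuotientGroup.map L (L.map f) f (Subgroup.le_comap_map f L)) ?_⟩
  intro y
  obtain ⟨y, rfl⟩ := QuotientGroup.mk_surjective y
  obtain ⟨x, rfl⟩ := hf y
  exact ⟨(x : Y ⧸ L), rfl⟩

theorem Subgroup.FG.of_le_comm {Y : Type*} [CommGroup Y] {L M : Subgroup Y} (hL : L.FG)
    (hM : M ≤ L) : M.FG := by
  rw [Subgroup.fg_iff_add_fg] at hL ⊢
  rw [← AddSubgroup.toIntSubmodule_toAddSubgroup (Subgroup.toAddSubgroup M),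
    ← Submodule.fg_iff_addSubgroup_fg]
  rw [← AddSubgroup.toIntSubmodule_toAddSubgroup (Subgroup.toAddSubgroup L),
    ← Submodule.fg_iff_addSubgroup_fg] at hL
  have : IsNoetherian ℤ (AddSubgroup.toIntSubmodule (Subgroup.toAddSubgroup L)) :=
    isNoetherian_of_fg_of_noetherian _ hL
  exact Submodule.FG.of_le hL (fun x hx => hM hx)

theorem HasThinRank.of_injective {Y Y' : Type*} [CommGroup Y] [CommGroup Y'] (f : Y →* Y')
    (hf : Function.Injective f) (h : HasThinRank Y') : HasThinRank Y := by
  obtain ⟨L, hL, hT⟩ := h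
  refine ⟨L.comap f, ?_, hT.of_injective (QuotientGroup.map (L.comap f) L f le_rfl) ?_⟩
  · have h1 : ((L.comap f).map f).FG := hL.of_le_comm (Subgroup.map_comap_le f L)
    have h2 : Group.FG ((L.comap f).map f) := (Group.fg_iff_subgroup_fg _).2 h1
    rw [← Group.fg_iff_subgroup_fg]
    exact Group.fg_of_surjective
      (f := ((L.comap f).equivMapOfInjective f hf).symm.toMonoidHom) (MulEquiv.surjective _)
  · rw [injective_iff_map_eq_one]
    intro x hx
    obtain ⟨x, rfl⟩ := QuotientGroup.mk_surjective x
    rw [QuotientGroup.map_mk, QuotientGroup.eq_one_iff] at hx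
    exact (QuotientGroup.eq_one_iff _).2 hx

theorem HasThinRank.of_extension {Y : Type*} [CommGroup Y] (B : Subgroup Y)
    (hB : HasThinRank B) (hQ : HasThinRank (Y ⧸ B)) : HasThinRank Y := by
  classical
  obtain ⟨L₁, hL₁, hT₁⟩ := hB
  obtain ⟨L₂, hL₂, hT₂⟩ := hQ
  obtain ⟨S, hS⟩ := hL₂
  choose g hg using QuotientGroup.mk_surjective (s := B)
  let M : Subgroup Y := Subgroup.closure (S.image g : Finset Y)
  have hM : M.map (QuotientGroup.mk' B) = L₂ := by
    rw [MonoidHom.map_closure, ← hS]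
    congr 1
    ext y
    simp [hg]
  refine ⟨L₁.map B.subtype ⊔ M, (hL₁.map_hom _).sup ⟨_, rfl⟩, ?_⟩
  set L := L₁.map B.subtype ⊔ M with hL
  refine IsThinTorsion.of_extension (B.map (QuotientGroup.mk' L)) ?_ ?_
  · let φ : B →* (B.map (QuotientGroup.mk' L)) := (QuotientGroup.mk' L).subgroupMap B
    have hφ : L₁ ≤ φ.ker := by
      intro x hx
      rw [MonoidHom.mem_ker]
      refine Subtype.ext ?_
      change ((x : Y) : Y ⧸ L) = 1
      rw [QuotientGroup.eq_one_iff]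
      exact (le_sup_left : L₁.map B.subtype ≤ L) ⟨x, hx, rfl⟩
    refine hT₁.of_surjective (QuotientGroup.lift L₁ φ hφ) ?_
    intro y
    obtain ⟨x, rfl⟩ := (QuotientGroup.mk' L).subgroupMap_surjective B y
    exact ⟨(x : B ⧸ L₁), rfl⟩
  · -- the quotient of `Y` by `L` and `B` is a quotient of `(Y / B) / L₂`
    let ψ : Y ⧸ B →* (Y ⧸ L) ⧸ (B.map (QuotientGroup.mk' L)) :=
      QuotientGroup.map B (B.map (QuotientGroup.mk' L)) (QuotientGroup.mk' L)
        (Subgroup.le_comap_map _ _)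
    have hψ : L₂ ≤ ψ.ker := by
      rw [← hM]
      rintro _ ⟨x, hx, rfl⟩
      rw [MonoidHom.mem_ker]
      change (QuotientGroup.mk' (B.map (QuotientGroup.mk' L))) (x : Y ⧸ L) = 1
      have : (x : Y ⧸ L) = 1 := by
        rw [QuotientGroup.eq_one_iff]
        exact (le_sup_right : M ≤ L) hx
      rw [this, map_one]
    refine hT₂.of_surjective (QuotientGroup.lift L₂ ψ hψ) ?_
    intro y
    obtain ⟨y, rfl⟩ := QuotientGroup.mk_surjective y
    obtain ⟨y, rfl⟩ := QuotientGroup.mk_surjective y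
    exact ⟨((y : Y ⧸ B) : (Y ⧸ B) ⧸ L₂), rfl⟩

/-! ### Abelian factors of finite ranks -/

/-- An abelian factor `H / K`, presented as a surjection of `H` onto a commutative group. -/
theorem exists_abelian_surjection {G : Type u} [Group G] {K H : Subgroup G}
    (hnorm : ∀ x ∈ H, ∀ y ∈ K, x * y * x⁻¹ ∈ K)
    (hcomm : ∀ x ∈ H, ∀ y ∈ H, x * y * x⁻¹ * y⁻¹ ∈ K) :
    ∃ (Y : Type u) (_ : CommGroup Y) (f : H →* Y), Function.Surjective f ∧
      ∀ x, f x = 1 ↔ (x : G) ∈ K := by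
  have hN : (K.subgroupOf H).Normal := ⟨fun y hy x => hnorm x x.2 y hy⟩
  have hc : ∀ a b : H ⧸ K.subgroupOf H, a * b = b * a := by
    intro a b
    obtain ⟨a, rfl⟩ := QuotientGroup.mk_surjective a
    obtain ⟨b, rfl⟩ := QuotientGroup.mk_surjective b
    change ((a * b : H) : H ⧸ K.subgroupOf H) = ((b * a : H) : H ⧸ K.subgroupOf H)
    rw [QuotientGroup.eq, Subgroup.mem_subgroupOf]
    have := hcomm _ (H.inv_mem b.2) _ (H.inv_mem a.2)
    simpa [mul_assoc] using this
  exact ⟨H ⧸ K.subgroupOf H, { QuotientGroup.Quotient.group _ with mul_comm := hc },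
    QuotientGroup.mk' _, QuotientGroup.mk'_surjective _,
    fun x => (QuotientGroup.eq_one_iff x).trans Subgroup.mem_subgroupOf⟩

/-- Finite torsion-free rank and finite `p`-torsion for every prime `p`. -/
def HasFiniteRanks (Y : Type*) [CommGroup Y] : Prop :=
  (∃ n : ℕ, ∀ f : Fin (n + 1) → Y, ∃ c : Fin (n + 1) → ℤ, c ≠ 0 ∧ ∏ i, f i ^ c i = 1) ∧
    ∀ p : ℕ, p.Prime → {y : Y | y ^ p = 1}.Finite

theorem finite_torsion_iff {G : Type*} [Group G] {K H : Subgroup G} {Y : Type*} [CommGroup Y]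
    (hKH : K ≤ H) (f : H →* Y) (hf : Function.Surjective f) (hker : ∀ x, f x = 1 ↔ (x : G) ∈ K)
    (n : ℕ) : {y : Y | y ^ n = 1}.Finite ↔
      ∃ F : Finset G, ∀ x ∈ H, x ^ n ∈ K → ∃ b ∈ F, b⁻¹ * x ∈ K := by
  classical
  constructor
  · intro hp
    choose s hs using hf
    refine ⟨hp.toFinset.image (fun y => (s y : G)), fun x hx hxp => ?_⟩
    refine ⟨s (f ⟨x, hx⟩), ?_, ?_⟩
    · refine Finset.mem_image_of_mem _ ?_
      rw [Set.Finite.mem_toFinset, Set.mem_ofPred_eq, ← map_pow, hker]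
      simpa using hxp
    · refine (hker ((s (f ⟨x, hx⟩))⁻¹ * ⟨x, hx⟩)).1 ?_
      rw [map_mul, map_inv, hs, inv_mul_cancel]
  · rintro ⟨F, hF⟩
    refine (F.finite_toSet.image (fun b => if h : b ∈ H then f ⟨b, h⟩ else 1)).subset ?_
    intro y hy
    obtain ⟨x, rfl⟩ := hf y
    obtain ⟨b, hb, hbx⟩ := hF x x.2 (by
      have := (hker (x ^ n)).1 (by simpa using hy)
      simpa using this)
    have hbH : b ∈ H := by
      have := H.mul_mem x.2 (H.inv_mem (hKH hbx))
      simpa using this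
    refine ⟨b, hb, ?_⟩
    have := (hker (⟨b, hbH⟩⁻¹ * x)).2 hbx
    rw [map_mul, map_inv, inv_mul_eq_one] at this
    simpa [hbH] using this

/-- A factor has finite ranks exactly when any commutative group presenting it does; the ordered
products in the definition become ordinary products in a commutative group. -/
theorem isFARFactor_iff {G : Type*} [Group G] {K H : Subgroup G} {Y : Type*} [CommGroup Y]
    (hKH : K ≤ H) (f : H →* Y) (hf : Function.Surjective f) (hker : ∀ x, f x = 1 ↔ (x : G) ∈ K) :
    IsFARFactor K H ↔ HasFiniteRanks Y := by
  classical
  have hprod : ∀ (n : ℕ) (g : Fin n → H) (c : Fin n → ℤ),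
      f (List.ofFn fun i => g i ^ c i).prod = ∏ i, f (g i) ^ c i := by
    intro n g c
    rw [map_list_prod, List.map_ofFn, List.prod_ofFn]
    simp
  have hprod' : ∀ (n : ℕ) (g : Fin n → H) (c : Fin n → ℤ),
      (((List.ofFn fun i => g i ^ c i).prod : H) : G) =
        (List.ofFn fun i => (g i : G) ^ c i).prod := by
    intro n g c
    rw [← Subgroup.coe_subtype, map_list_prod, List.map_ofFn]
    congr
  constructor
  · rintro ⟨-, -, -, ⟨n, hn⟩, hp⟩
    refine ⟨⟨n, fun g => ?_⟩, fun p hpp => ?_⟩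
    · choose s hs using hf
      obtain ⟨c, hc, hmem⟩ := hn (fun i => s (g i)) (fun i => (s (g i)).2)
      refine ⟨c, hc, ?_⟩
      rw [← hprod', ← hker, hprod] at hmem
      simpa [hs] using hmem
    · exact (finite_torsion_iff hKH f hf hker p).2 (hp p hpp)
  · rintro ⟨⟨n, hn⟩, hp⟩
    refine ⟨hKH, fun x hx y hy => ?_, fun x hx y hy => ?_, ⟨n, fun g hg => ?_⟩, fun p hpp => ?_⟩
    · refine (hker (⟨x, hx⟩ * ⟨y, hKH hy⟩ * ⟨x, hx⟩⁻¹)).1 ?_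
      rw [map_mul, map_mul, (hker ⟨y, hKH hy⟩).2 hy, map_inv]
      simp
    · refine (hker (⟨x, hx⟩ * ⟨y, hy⟩ * ⟨x, hx⟩⁻¹ * ⟨y, hy⟩⁻¹)).1 ?_
      simp only [map_mul, map_inv]
      rw [mul_comm (f _) (f _)]
      simp
    · obtain ⟨c, hc, h1⟩ := hn (fun i => f ⟨g i, hg i⟩)
      refine ⟨c, hc, ?_⟩
      have := hprod' _ (fun i => ⟨g i, hg i⟩) c
      simp only at this
      rw [← this, ← hker, hprod, h1]
    · exact (finite_torsion_iff hKH f hf hker p).1 (hp p hpp)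

theorem finite_torsion_of_prime {T : Type*} [CommGroup T]
    (h : ∀ p : ℕ, p.Prime → {x : T | x ^ p = 1}.Finite) (n : ℕ) (hn : 0 < n) :
    {x : T | x ^ n = 1}.Finite := by
  induction n using Nat.recOnMul with
  | zero => omega
  | one => simp
  | prime p hp => exact h p hp
  | mul a b iha ihb =>
    have ha := iha (Nat.pos_of_mul_pos_right hn)
    have hb := ihb (Nat.pos_of_mul_pos_left hn)
    refine Set.Finite.of_finite_fibers (fun x => x ^ a) (hb.subset ?_) ?_
    · rintro _ ⟨x, hx, rfl⟩
      simp only [Set.mem_ofPred_eq] at hx ⊢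
      rw [← pow_mul, hx]
    · rintro _ ⟨x, hx, rfl⟩
      refine (ha.image (fun t => x * t)).subset ?_
      rintro y ⟨-, hy⟩
      refine ⟨x⁻¹ * y, ?_, by simp⟩
      simp only [Set.mem_preimage, Set.mem_singleton_iff] at hy
      simp [mul_pow, hy]

/-- A maximal independent family generates a subgroup with torsion quotient. -/
theorem exists_fg_torsion_quotient {Y : Type*} [CommGroup Y] {n : ℕ}
    (hn : ∀ f : Fin (n + 1) → Y, ∃ c : Fin (n + 1) → ℤ, c ≠ 0 ∧ ∏ i, f i ^ c i = 1) :
    ∃ L : Subgroup Y, L.FG ∧ ∀ y : Y, ∃ m : ℕ, 0 < m ∧ y ^ m ∈ L := by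
  classical
  -- the least size at which every family is dependent
  let P : ℕ → Prop := fun k =>
    ∀ f : Fin k → Y, ∃ c : Fin k → ℤ, c ≠ 0 ∧ ∏ i, f i ^ c i = 1
  have hP : ∃ k, P k := ⟨n + 1, hn⟩
  have hk := Nat.find_spec hP
  obtain ⟨k, hkk⟩ : ∃ k, Nat.find hP = k + 1 := by
    refine Nat.exists_eq_succ_of_ne_zero fun h0 => ?_
    rw [h0] at hk
    obtain ⟨c, hc, -⟩ := hk Fin.elim0
    exact hc (funext fun i => i.elim0)
  rw [hkk] at hk
  have hmin : ¬ P k := Nat.find_min hP (by omega)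
  obtain ⟨f, hf⟩ := not_forall.1 hmin
  have hf : ∀ c : Fin k → ℤ, ∏ i, f i ^ c i = 1 → c = 0 := by
    intro c hc
    by_contra hne
    exact hf ⟨c, hne, hc⟩
  refine ⟨Subgroup.closure (Finset.univ.image f : Finset Y), ⟨_, rfl⟩, fun y => ?_⟩
  obtain ⟨c, hc, h1⟩ := hk (Fin.snoc f y : Fin (k + 1) → Y)
  rw [Fin.prod_univ_castSucc] at h1
  simp only [Fin.snoc_castSucc, Fin.snoc_last] at h1
  have hlast : c (Fin.last k) ≠ 0 := by
    intro h0
    rw [h0, zpow_zero, mul_one] at h1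
    have := hf _ h1
    refine hc (funext fun i => ?_)
    induction i using Fin.lastCases with
    | last => exact h0
    | cast i => exact congrFun this i
  have hmem : y ^ c (Fin.last k) ∈ Subgroup.closure ((Finset.univ.image f : Finset Y) : Set Y) := by
    rw [eq_inv_of_mul_eq_one_right h1]
    refine Subgroup.inv_mem _ (Subgroup.prod_mem _ fun i _ => Subgroup.zpow_mem _ ?_ _)
    exact Subgroup.subset_closure (by simp)
  refine ⟨(c (Fin.last k)).natAbs, Int.natAbs_pos.2 hlast, ?_⟩
  rcases Int.natAbs_eq (c (Fin.last k)) with h | h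
  · rw [h, zpow_natCast] at hmem
    exact hmem
  · rw [h, zpow_neg, zpow_natCast] at hmem
    exact (Subgroup.inv_mem_iff _).1 hmem

/-- Finite ranks pass to the thin torsion quotient: factoring out a finitely generated subgroup with
torsion quotient keeps the `p`-torsion finite, and finite `p`-torsion for all primes `p` makes a
torsion group thin. -/
theorem HasFiniteRanks.hasThinRank {Y : Type*} [CommGroup Y] (h : HasFiniteRanks Y) :
    HasThinRank Y := by
  obtain ⟨⟨n, hn⟩, hp⟩ := h
  obtain ⟨L, hL, htor⟩ := exists_fg_torsion_quotient hn
  refine ⟨L, hL, fun x => ?_, finite_torsion_of_prime fun p hpp => ?_⟩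
  · obtain ⟨y, rfl⟩ := QuotientGroup.mk_surjective x
    obtain ⟨m, hm, hy⟩ := htor y
    exact ⟨m, hm, by rw [← QuotientGroup.mk_pow, QuotientGroup.eq_one_iff]; exact hy⟩
  · -- the `p`-th power map sends the `p`-torsion of `Y / L` to the finite group `L / pL`,
    -- with fibres covered by the `p`-torsion of `Y`
    let M : Subgroup Y := L.map (powMonoidHom p)
    have hfin : ((L.map (QuotientGroup.mk' M) : Subgroup (Y ⧸ M)) : Set (Y ⧸ M)).Finite := by
      have hfg : Group.FG (L.map (QuotientGroup.mk' M)) :=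
        (Group.fg_iff_subgroup_fg _).2 (hL.map_hom _)
      have htor : IsMulTorsion (L.map (QuotientGroup.mk' M)) := by
        rintro ⟨_, x, hx, rfl⟩
        refine isOfFinOrder_iff_pow_eq_one.2 ⟨p, hpp.pos, Subtype.ext ?_⟩
        change ((x : Y ⧸ M)) ^ p = 1
        rw [← QuotientGroup.mk_pow, QuotientGroup.eq_one_iff]
        exact ⟨x, hx, rfl⟩
      have := CommGroup.finite_of_fg_isMulTorsion _ htor
      exact Set.toFinite _
    choose s hs using QuotientGroup.mk_surjective (s := L)
    refine Set.Finite.of_finite_fibers (fun x : Y ⧸ L => ((s x ^ p : Y) : Y ⧸ M))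
      (hfin.subset ?_) ?_
    · rintro _ ⟨x, hx, rfl⟩
      refine ⟨s x ^ p, ?_, rfl⟩
      have : ((s x : Y) : Y ⧸ L) ^ p = 1 := by rw [hs]; exact hx
      rwa [← QuotientGroup.mk_pow, QuotientGroup.eq_one_iff] at this
    · rintro _ ⟨x, hx, rfl⟩
      refine Set.Finite.subset (Set.Finite.image (fun t : Y => x * (t : Y ⧸ L)) (hp p hpp)) ?_
      rintro y ⟨-, hy⟩
      simp only [Set.mem_preimage, Set.mem_singleton_iff] at hy
      obtain ⟨l, hl, hl'⟩ := QuotientGroup.eq.1 hy.symm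
      simp only [powMonoidHom_apply] at hl'
      refine ⟨(s x)⁻¹ * s y * l⁻¹, ?_, ?_⟩
      · simp [mul_pow, hl']
      · have : ((l : Y) : Y ⧸ L) = 1 := (QuotientGroup.eq_one_iff _).2 hl
        simp [this, hs]

/-- In a group of finite abelian ranks every abelian section has thin rank. The induction runs
over the subgroups of a series. -/
theorem hasThinRank_of_chain {G : Type u} [Group G] {X : Subgroup G}
    (h : Relation.ReflTransGen (IsFARFactor (G := G)) ⊥ X) :
    ∀ (H : Subgroup G), H ≤ X → ∀ (Y : Type u) [CommGroup Y] (f : H →* Y),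
      Function.Surjective f → HasThinRank Y := by
  induction h with
  | refl =>
    intro H hH Y _ f hf
    have hsub : Subsingleton H := by
      rw [le_bot_iff.1 hH]
      infer_instance
    have : Finite Y := Finite.of_surjective f hf
    have hY : Subsingleton Y := hf.subsingleton
    refine ⟨⊤, ⟨∅, Subsingleton.elim _ _⟩, fun x => ⟨1, one_pos, ?_⟩, fun n hn => Set.toFinite _⟩
    obtain ⟨x, rfl⟩ := QuotientGroup.mk_surjective x
    rw [pow_one, QuotientGroup.eq_one_iff]
    trivial
  | @tail X₁ X₂ _ h12 ih =>
    intro H hH Y _ f hf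
    let H₁ : Subgroup G := H ⊓ X₁
    let j : H₁ →* H := Subgroup.inclusion inf_le_left
    let f₁ : H₁ →* Y := f.comp j
    have hR : HasThinRank f₁.range :=
      ih H₁ inf_le_right f₁.range f₁.rangeRestrict f₁.rangeRestrict_surjective
    refine HasThinRank.of_extension f₁.range hR ?_
    obtain ⟨Z, _, q, hq, hqk⟩ := exists_abelian_surjection h12.2.1 h12.2.2.1
    have hZ : HasThinRank Z := ((isFARFactor_iff h12.1 q hq hqk).1 h12).hasThinRank
    let qH : H →* Z := q.comp (Subgroup.inclusion hH)
    have hI : HasThinRank qH.range := hZ.of_injective qH.range.subtype Subtype.val_injective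
    have hker : qH.rangeRestrict.ker ≤ ((QuotientGroup.mk' f₁.range).comp f).ker := by
      intro x hx
      rw [MonoidHom.ker_rangeRestrict, MonoidHom.mem_ker] at hx
      have hx1 : (x : G) ∈ X₁ := (hqk (Subgroup.inclusion hH x)).1 hx
      rw [MonoidHom.mem_ker, MonoidHom.comp_apply, QuotientGroup.mk'_apply,
        QuotientGroup.eq_one_iff]
      exact ⟨⟨x, x.2, hx1⟩, rfl⟩
    let φ := qH.rangeRestrict.liftOfSurjective qH.rangeRestrict_surjective
      ⟨(QuotientGroup.mk' f₁.range).comp f, hker⟩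
    refine hI.of_surjective φ fun y => ?_
    obtain ⟨y, rfl⟩ := QuotientGroup.mk_surjective y
    obtain ⟨x, rfl⟩ := hf y
    exact ⟨qH.rangeRestrict x, MonoidHom.liftOfRightInverse_comp_apply _ _ _ _ x⟩

/-! ### Minimax groups have finite abelian ranks -/

/-- The subgroup of `G` between `ker f` and `H` that corresponds to a subgroup `U` of the
quotient `f : H → Q`. -/
def liftSubgroup {G Q : Type*} [Group G] [Group Q] {H : Subgroup G} (f : H →* Q)
    (U : Subgroup Q) : Subgroup G :=
  (U.comap f).map H.subtype

theorem mem_liftSubgroup {G Q : Type*} [Group G] [Group Q] {H : Subgroup G} {f : H →* Q}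
    {U : Subgroup Q} {x : G} : x ∈ liftSubgroup f U ↔ ∃ h : x ∈ H, f ⟨x, h⟩ ∈ U := by
  simp [liftSubgroup]

theorem liftSubgroup_le {G Q : Type*} [Group G] [Group Q] {H : Subgroup G} (f : H →* Q)
    (U : Subgroup Q) : liftSubgroup f U ≤ H := fun _ hx => (mem_liftSubgroup.1 hx).1

theorem liftSubgroup_mono {G Q : Type*} [Group G] [Group Q] {H : Subgroup G} (f : H →* Q) :
    Monotone (liftSubgroup f) := fun U V hUV x hx => by
  rw [mem_liftSubgroup] at hx ⊢
  exact ⟨hx.1, hUV hx.2⟩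

theorem liftSubgroup_strictMono {G Q : Type*} [Group G] [Group Q] {H : Subgroup G} (f : H →* Q)
    (hf : Function.Surjective f) : StrictMono (liftSubgroup f) := by
  refine (liftSubgroup_mono f).strictMono_of_injective fun U V hUV => ?_
  ext q
  obtain ⟨x, rfl⟩ := hf q
  have h1 : (x : G) ∈ liftSubgroup f U ↔ f x ∈ U := by simp [mem_liftSubgroup]
  have h2 : (x : G) ∈ liftSubgroup f V ↔ f x ∈ V := by simp [mem_liftSubgroup]
  rw [← h1, ← h2, hUV]

theorem liftSubgroup_bot {G Q : Type*} [Group G] [Group Q] {K H : Subgroup G} (f : H →* Q)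
    (hKH : K ≤ H) (hker : ∀ x, f x = 1 ↔ (x : G) ∈ K) : liftSubgroup f ⊥ = K := by
  ext x
  rw [mem_liftSubgroup]
  exact ⟨fun ⟨h, hx⟩ => (hker _).1 hx, fun hx => ⟨hKH hx, (hker _).2 hx⟩⟩

theorem liftSubgroup_top {G Q : Type*} [Group G] [Group Q] {H : Subgroup G} (f : H →* Q) :
    liftSubgroup f ⊤ = H := by
  ext x
  simp [mem_liftSubgroup]

theorem le_liftSubgroup {G Q : Type*} [Group G] [Group Q] {K H : Subgroup G} (f : H →* Q)
    (hKH : K ≤ H) (hker : ∀ x, f x = 1 ↔ (x : G) ∈ K) (U : Subgroup Q) :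
    K ≤ liftSubgroup f U := by
  rw [← liftSubgroup_bot f hKH hker]
  exact liftSubgroup_mono f bot_le

theorem wellFoundedLT_of_no_strictAnti {α : Type*} [Preorder α]
    (h : ¬∃ f : ℕ → α, StrictAnti f) : WellFoundedLT α := by
  refine ⟨RelEmbedding.wellFounded_iff_isEmpty.2 ⟨fun e => h ⟨e, fun a b hab => ?_⟩⟩⟩
  exact e.map_rel_iff.2 hab

theorem wellFoundedGT_of_no_strictMono {α : Type*} [Preorder α]
    (h : ¬∃ f : ℕ → α, StrictMono f) : WellFoundedGT α := by
  refine ⟨RelEmbedding.wellFounded_iff_isEmpty.2 ⟨fun e => h ⟨e, fun a b hab => ?_⟩⟩⟩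
  exact e.map_rel_iff.2 hab

theorem HasFiniteRanks.of_wellFoundedGT {Y : Type*} [CommGroup Y] [WellFoundedGT (Subgroup Y)] :
    HasFiniteRanks Y := by
  have hN : IsNoetherian ℤ (Additive Y) := by
    rw [isNoetherian_iff']
    have e : Submodule ℤ (Additive Y) ≃o Subgroup Y :=
      (AddSubgroup.toIntSubmodule (M := Additive Y)).symm.trans Subgroup.toAddSubgroup.symm
    exact e.strictMono.wellFoundedGT
  have hfg : (⊤ : Subgroup Y).FG := by
    rw [← Group.fg_def, GroupFG.iff_add_fg, ← Module.Finite.iff_addGroup_fg]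
    infer_instance
  refine ⟨⟨Module.finrank ℤ (Additive Y), fun f => ?_⟩, fun p hp => ?_⟩
  · have hdep : ¬ LinearIndependent ℤ (fun i => Additive.ofMul (f i)) := by
      intro hli
      have := hli.fintype_card_le_finrank
      simp at this
    obtain ⟨c, hc, i, hi⟩ := Fintype.not_linearIndependent_iff.1 hdep
    refine ⟨c, fun h => hi (by rw [h]; rfl), ?_⟩
    apply Additive.ofMul.injective
    rw [ofMul_prod]
    simpa using hc
  · let P : Subgroup Y := (powMonoidHom p : Y →* Y).ker
    have : Group.FG P := (Group.fg_iff_subgroup_fg _).2 (hfg.of_le_comm le_top)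
    have hfin := CommGroup.finite_of_fg_isMulTorsion P (fun x =>
      isOfFinOrder_iff_pow_eq_one.2 ⟨p, hp.pos, Subtype.ext x.2⟩)
    exact Set.toFinite (P : Set Y)

/-- Under the minimal condition an abelian group is torsion, because the cyclic groups generated
by the powers `y ^ 2 ^ m` stabilise, and it has finite `p`-torsion, which is an Artinian vector
space over `ZMod p`. -/
theorem HasFiniteRanks.of_wellFoundedLT {Y : Type*} [CommGroup Y] [WellFoundedLT (Subgroup Y)] :
    HasFiniteRanks Y := by
  refine ⟨⟨0, fun f => ?_⟩, fun p hp => ?_⟩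
  · obtain ⟨m, hm⟩ := WellFoundedGT.monotone_chain_condition (α := (Subgroup Y)ᵒᵈ)
      ⟨fun m : ℕ => OrderDual.toDual (Subgroup.zpowers (f 0 ^ 2 ^ m)), fun a b hab => by
        change Subgroup.zpowers _ ≤ Subgroup.zpowers _
        rw [Subgroup.zpowers_le]
        obtain ⟨k, rfl⟩ := Nat.exists_eq_add_of_le hab
        rw [pow_add, pow_mul]
        exact Subgroup.pow_mem _ (Subgroup.mem_zpowers _) _⟩
    have h1 : f 0 ^ 2 ^ m ∈ Subgroup.zpowers (f 0 ^ 2 ^ (m + 1)) := by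
      have := hm (m + 1) (Nat.le_succ m)
      have h2 : Subgroup.zpowers (f 0 ^ 2 ^ m) = Subgroup.zpowers (f 0 ^ 2 ^ (m + 1)) := this
      rw [← h2]
      exact Subgroup.mem_zpowers _
    obtain ⟨k, hk⟩ := h1
    refine ⟨fun _ => 2 ^ m * (1 - 2 * k), fun h => ?_, ?_⟩
    · have := congrFun h 0
      have h2 : (2 : ℤ) ^ m ≠ 0 := by positivity
      simp only [Pi.zero_apply, mul_eq_zero, h2, false_or] at this
      omega
    · refine (Fin.prod_univ_one (fun i : Fin 1 => f i ^ ((2 : ℤ) ^ m * (1 - 2 * k)))).trans ?_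
      have hk' : f 0 ^ ((2 : ℤ) ^ (m + 1) * k) = f 0 ^ ((2 : ℤ) ^ m) := by
        rw [zpow_mul]
        exact_mod_cast hk
      rw [mul_sub, mul_one, zpow_sub, ← hk', ← mul_assoc, ← pow_succ, mul_inv_cancel]
  · have := Fact.mk hp
    let P : Subgroup Y := (powMonoidHom p : Y →* Y).ker
    let _ : Module (ZMod p) (Additive P) := AddCommGroup.zmodModule (n := p) (fun x =>
      Subtype.ext (x.toMul).2)
    let F : Submodule (ZMod p) (Additive P) → Subgroup Y := fun W =>
      (AddSubgroup.toSubgroup' W.toAddSubgroup : Subgroup P).map P.subtype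
    have hF : StrictMono F := by
      refine Monotone.strictMono_of_injective (fun U V hUV => Subgroup.map_mono hUV) ?_
      intro U V hUV
      have := Subgroup.map_injective P.subtype_injective hUV
      exact Submodule.toAddSubgroup_injective (AddSubgroup.toSubgroup'.injective this)
    have hA : IsArtinian (ZMod p) (Additive P) := hF.wellFoundedLT
    have hfin : Module.Finite (ZMod p) (Additive P) :=
      (IsSemisimpleModule.finite_tfae.out 2 0).1 hA
    have : Finite (Additive P) := Module.finite_of_finite (ZMod p)
    have : Finite P := this
    exact Set.toFinite (P : Set Y)

theorem isFARFactor_of_isMinimaxFactor {G : Type u} [Group G] {K H : Subgroup G}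
    (h : IsMinimaxFactor K H) (hcomm : ∀ x ∈ H, ∀ y ∈ H, x * y * x⁻¹ * y⁻¹ ∈ K) :
    IsFARFactor K H := by
  obtain ⟨Y, _, f, hf, hker⟩ := exists_abelian_surjection h.2.1 hcomm
  rw [isFARFactor_iff h.1 f hf hker]
  rcases h.2.2 with hmax | hmin
  · have : WellFoundedGT (Subgroup Y) := wellFoundedGT_of_no_strictMono fun ⟨s, hs⟩ =>
      hmax ⟨fun m => liftSubgroup f (s m),
        fun m => ⟨le_liftSubgroup f h.1 hker _, liftSubgroup_le f _⟩,
        (liftSubgroup_strictMono f hf).comp hs⟩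
    exact .of_wellFoundedGT
  · have : WellFoundedLT (Subgroup Y) := wellFoundedLT_of_no_strictAnti fun ⟨s, hs⟩ =>
      hmin ⟨fun m => liftSubgroup f (s m),
        fun m => ⟨le_liftSubgroup f h.1 hker _, liftSubgroup_le f _⟩,
        (liftSubgroup_strictMono f hf).comp_strictAnti hs⟩
    exact .of_wellFoundedLT

/-- In a soluble group a minimax factor is refined, along the derived series of the factor, to
abelian minimax factors. -/
theorem farChain_of_isMinimaxFactor {G : Type u} [Group G] [Group.IsSolvable G] {K H : Subgroup G}
    (h : IsMinimaxFactor K H) : Relation.ReflTransGen (IsFARFactor (G := G)) K H := by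
  have hN : (K.subgroupOf H).Normal := ⟨fun y hy x => h.2.1 x x.2 y hy⟩
  let f : H →* H ⧸ K.subgroupOf H := QuotientGroup.mk' _
  have hker : ∀ x, f x = 1 ↔ (x : G) ∈ K := fun x =>
    (QuotientGroup.eq_one_iff x).trans Subgroup.mem_subgroupOf
  let D : ℕ → Subgroup G := fun j => liftSubgroup f (derivedSeries _ j)
  have hD : ∀ j, Relation.ReflTransGen (IsFARFactor (G := G)) (D j) H := by
    intro j
    induction j with
    | zero =>
      change Relation.ReflTransGen _ (liftSubgroup f ⊤) H
      rw [liftSubgroup_top]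
    | succ j ih =>
      refine Relation.ReflTransGen.head (isFARFactor_of_isMinimaxFactor ⟨?_, ?_, ?_⟩ ?_) ih
      · exact liftSubgroup_mono f (derivedSeries_antitone _ (Nat.le_succ j))
      · intro x hx y hy
        obtain ⟨hx, hx'⟩ := mem_liftSubgroup.1 hx
        obtain ⟨hy, hy'⟩ := mem_liftSubgroup.1 hy
        exact mem_liftSubgroup.2 ⟨H.mul_mem (H.mul_mem hx hy) (H.inv_mem hx),
          (derivedSeries_normal _ (j + 1)).conj_mem _ hy' (f ⟨x, hx⟩)⟩
      · exact h.2.2.imp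
          (fun hm ⟨s, hs, hs'⟩ => hm ⟨s, fun m =>
            ⟨(le_liftSubgroup f h.1 hker _).trans (hs m).1,
              (hs m).2.trans (liftSubgroup_le f _)⟩, hs'⟩)
          (fun hm ⟨s, hs, hs'⟩ => hm ⟨s, fun m =>
            ⟨(le_liftSubgroup f h.1 hker _).trans (hs m).1,
              (hs m).2.trans (liftSubgroup_le f _)⟩, hs'⟩)
      · intro x hx y hy
        obtain ⟨hx, hx'⟩ := mem_liftSubgroup.1 hx
        obtain ⟨hy, hy'⟩ := mem_liftSubgroup.1 hy
        exact mem_liftSubgroup.2 ⟨H.mul_mem (H.mul_mem (H.mul_mem hx hy) (H.inv_mem hx))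
          (H.inv_mem hy), Subgroup.commutator_mem_commutator hx' hy'⟩
  obtain ⟨d, hd⟩ := (Group.isSolvable_def (H ⧸ K.subgroupOf H)).1 inferInstance
  have := hD d
  rwa [show D d = K by
    change liftSubgroup f (derivedSeries _ d) = K
    rw [hd, liftSubgroup_bot f h.1 hker]] at this

theorem IsMinimax.isFARGroup {G : Type u} [Group G] [Group.IsSolvable G] (h : IsMinimax G) :
    IsFARGroup G := by
  rw [isMinimax_iff_chain] at h
  rw [isFARGroup_iff_chain]
  generalize (⊤ : Subgroup G) = H at h ⊢
  induction h with
  | refl => exact .refl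
  | tail _ hab ih => exact ih.trans (farChain_of_isMinimaxFactor hab)

/-! ### Cyclic and divisible factors -/

/-- The factor `H / K` is abelian, divisible and `r`-primary torsion, and has finitely many
elements of each order: a finite direct sum of Prüfer groups for primes dividing `r`. -/
def IsDivisibleFactor {G : Type*} [Group G] (r : ℕ) (K H : Subgroup G) : Prop :=
  (∀ x ∈ H, ∀ y ∈ H, x * y * x⁻¹ * y⁻¹ ∈ K) ∧
  (∀ x ∈ H, ∀ n : ℕ, 0 < n → ∃ y ∈ H, x⁻¹ * y ^ n ∈ K) ∧
  (∀ x ∈ H, ∃ j : ℕ, x ^ r ^ j ∈ K) ∧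
  (∀ n : ℕ, 0 < n → ∃ F : Finset G, ∀ x ∈ H, x ^ n ∈ K → ∃ b ∈ F, b⁻¹ * x ∈ K)

/-- `K` is normal in `H` and the factor `H / K` is either cyclic or divisible as in
`IsDivisibleFactor`. -/
def IsGoodFactor {G : Type*} [Group G] (r : ℕ) (K H : Subgroup G) : Prop :=
  K ≤ H ∧ (∀ x ∈ H, ∀ y ∈ K, x * y * x⁻¹ ∈ K) ∧
    ((∃ g ∈ H, ∀ h ∈ H, ∃ k : ℤ, h * g ^ k ∈ K) ∨ IsDivisibleFactor r K H)

theorem IsGoodFactor.mul_right {G : Type*} [Group G] {r : ℕ} {K H : Subgroup G}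
    (h : IsGoodFactor r K H) (k : ℕ) : IsGoodFactor (r * k) K H := by
  refine ⟨h.1, h.2.1, h.2.2.imp_right fun hd => ⟨hd.1, hd.2.1, fun x hx => ?_, hd.2.2.2⟩⟩
  obtain ⟨j, hj⟩ := hd.2.2.1 x hx
  refine ⟨j, ?_⟩
  rw [mul_pow, pow_mul]
  exact K.pow_mem hj _

theorem Relation.ReflTransGen.isGoodFactor_mul {G : Type*} [Group G] {r : ℕ} {K H : Subgroup G}
    (h : Relation.ReflTransGen (IsGoodFactor r) K H) (k : ℕ) :
    Relation.ReflTransGen (IsGoodFactor (r * k)) K H := by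
  induction h with
  | refl => exact .refl
  | tail _ hab ih => exact ih.tail (hab.mul_right k)

theorem exists_forall_ge_eq_of_antitone {ι α : Type*} [Preorder ι] [Nonempty ι] (f : ι → Set α)
    (hf : Antitone f) (hfin : ∀ i, (f i).Finite) : ∃ i, ∀ j, i ≤ j → f j = f i := by
  refine ⟨Function.argmin (fun i => (f i).ncard), fun j hj => ?_⟩
  exact Set.eq_of_subset_of_ncard_le (hf hj) (Function.argmin_le (fun i => (f i).ncard) j) (hfin _)

/-- An `r`-primary abelian group with finite `r`-torsion satisfies the minimal condition: a
subgroup is determined, among those containing it, by the sets of elements of order dividing `r`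
which are `r ^ k`-th powers in it. -/
theorem wellFoundedLT_of_primary {Y : Type*} [CommGroup Y] {r : ℕ}
    (htor : ∀ y : Y, ∃ j : ℕ, y ^ r ^ j = 1) (hfin : {y : Y | y ^ r = 1}.Finite) :
    WellFoundedLT (Subgroup Y) := by
  refine wellFoundedLT_of_no_strictAnti fun ⟨s, hs⟩ => ?_
  let F : ℕ × ℕ → Set Y := fun i => {z | z ^ r = 1 ∧ ∃ u ∈ s i.1, u ^ r ^ i.2 = z}
  have hFfin : ∀ i, (F i).Finite := fun i => hfin.subset fun z hz => hz.1
  have hF : Antitone F := by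
    rintro ⟨m, k⟩ ⟨m', k'⟩ ⟨hm, hk⟩ z ⟨hz, u, hu, huz⟩
    obtain ⟨l, rfl⟩ := Nat.exists_eq_add_of_le hk
    refine ⟨hz, u ^ r ^ l, (s m).pow_mem (hs.antitone hm hu) _, ?_⟩
    rw [← huz, ← pow_mul, ← pow_add, add_comm]
  obtain ⟨⟨m₀, k₀⟩, h₀⟩ := exists_forall_ge_eq_of_antitone F hF hFfin
  have hk : ∀ k, ∀ᶠ m in Filter.atTop, F (m + 1, k) = F (m, k) := by
    intro k
    obtain ⟨m₁, h₁⟩ := exists_forall_ge_eq_of_antitone (fun m => F (m, k))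
      (fun a b hab => hF ⟨hab, le_rfl⟩) (fun _ => hFfin _)
    filter_upwards [Filter.eventually_ge_atTop m₁] with m hm
    exact (h₁ (m + 1) (hm.trans (Nat.le_succ m))).trans (h₁ m hm).symm
  have hall : ∀ᶠ m in Filter.atTop, ∀ k, F (m + 1, k) = F (m, k) := by
    filter_upwards [Filter.eventually_ge_atTop m₀,
      ((Set.finite_lt_nat k₀).eventually_all).2 (fun k _ => hk k)] with m hm hlt k
    rcases lt_or_ge k k₀ with h | h
    · exact hlt k h
    · exact (h₀ (m + 1, k) ⟨hm.trans (Nat.le_succ m), h⟩).trans (h₀ (m, k) ⟨hm, h⟩).symm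
  obtain ⟨m, hm⟩ := hall.exists
  have hle : s (m + 1) ≤ s m := hs.antitone (Nat.le_succ m)
  have key : ∀ j : ℕ, ∀ u ∈ s m, u ^ r ^ j = 1 → u ∈ s (m + 1) := by
    intro j
    induction j with
    | zero =>
      intro u _ h
      rw [pow_zero, pow_one] at h
      exact h ▸ Subgroup.one_mem _
    | succ j ih =>
      intro u hu h
      have hz : u ^ r ^ j ∈ F (m, j) := ⟨by rw [← pow_mul, ← pow_succ, h], u, hu, rfl⟩
      rw [← hm j] at hz
      obtain ⟨-, v, hv, hvu⟩ := hz
      have h1 := ih (u * v⁻¹) ((s m).mul_mem hu ((s m).inv_mem (hle hv)))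
        (by rw [mul_pow, inv_pow, hvu, mul_inv_cancel])
      simpa using (s (m + 1)).mul_mem h1 hv
  refine (hs (Nat.lt_succ_self m)).not_ge fun u hu => ?_
  obtain ⟨j, hj⟩ := htor u
  exact key j u hu hj

theorem IsGoodFactor.isMinimaxFactor {G : Type u} [Group G] {r : ℕ} (hr : 0 < r)
    {K H : Subgroup G} (h : IsGoodFactor r K H) : IsMinimaxFactor K H := by
  refine ⟨h.1, h.2.1, ?_⟩
  rcases h.2.2 with ⟨g, hg, hcyc⟩ | hdiv
  · left
    rintro ⟨s, hs, hmono⟩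
    have hN : WellFoundedGT (Subgroup (Multiplicative ℤ)) := by
      have h1 : WellFoundedGT (Submodule ℤ ℤ) := inferInstance
      have e : Submodule ℤ ℤ ≃o Subgroup (Multiplicative ℤ) :=
        (AddSubgroup.toIntSubmodule (M := ℤ)).symm.trans AddSubgroup.toSubgroup
      exact e.symm.strictMono.wellFoundedGT
    obtain ⟨m, hm⟩ := WellFoundedGT.monotone_chain_condition
      ⟨fun m => (s m).comap (zpowersHom G g), fun a b hab => Subgroup.comap_mono (hmono.monotone hab)⟩
    have h1 : (s m).comap (zpowersHom G g) = (s (m + 1)).comap (zpowersHom G g) :=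
      hm (m + 1) (Nat.le_succ m)
    refine (hmono (Nat.lt_succ_self m)).not_ge fun x hx => ?_
    obtain ⟨k, hk⟩ := hcyc x ((hs _).2 hx)
    have h2 : Multiplicative.ofAdd k ∈ (s (m + 1)).comap (zpowersHom G g) := by
      rw [Subgroup.mem_comap, zpowersHom_apply, toAdd_ofAdd]
      simpa using (s (m + 1)).mul_mem ((s (m + 1)).inv_mem hx) ((hs _).1 hk)
    rw [← h1, Subgroup.mem_comap, zpowersHom_apply, toAdd_ofAdd] at h2
    simpa using (s m).mul_mem ((hs m).1 hk) ((s m).inv_mem h2)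
  · right
    rintro ⟨s, hs, hanti⟩
    obtain ⟨Y, _, f, hf, hker⟩ := exists_abelian_surjection h.2.1 hdiv.1
    have hw : WellFoundedLT (Subgroup Y) := by
      refine wellFoundedLT_of_primary (r := r) (fun y => ?_) ?_
      · obtain ⟨x, rfl⟩ := hf y
        obtain ⟨j, hj⟩ := hdiv.2.2.1 x x.2
        exact ⟨j, by rw [← map_pow, hker]; exact hj⟩
      · exact (finite_torsion_iff h.1 f hf hker r).2 (hdiv.2.2.2 r hr)
    -- the subgroups between `K` and `H` are recovered from their images in `Y`
    have hback : ∀ m, liftSubgroup f (((s m).subgroupOf H).map f) = s m := by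
      intro m
      ext x
      rw [mem_liftSubgroup]
      constructor
      · rintro ⟨hx, u, hu, hux⟩
        have h1 := (hker (u⁻¹ * ⟨x, hx⟩)).1 (by rw [map_mul, map_inv, hux, inv_mul_cancel])
        simpa using (s m).mul_mem (Subgroup.mem_subgroupOf.1 hu) ((hs m).1 h1)
      · intro hx
        exact ⟨(hs m).2 hx, ⟨x, (hs m).2 hx⟩, hx, rfl⟩
    obtain ⟨m, hm⟩ := WellFoundedGT.monotone_chain_condition (α := (Subgroup Y)ᵒᵈ)
      ⟨fun m => OrderDual.toDual (((s m).subgroupOf H).map f), fun a b hab =>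
        Subgroup.map_mono (Subgroup.comap_mono (hanti.antitone hab))⟩
    have h1 : ((s m).subgroupOf H).map f = ((s (m + 1)).subgroupOf H).map f :=
      hm (m + 1) (Nat.le_succ m)
    refine (hanti (Nat.lt_succ_self m)).ne ?_
    rw [← hback m, ← hback (m + 1), h1]

/-! ### Derivations -/

section Derivations

variable {E V : Type*} [Group E] [AddCommGroup V] [DistribMulAction E V]

/-- `d` restricts to a derivation (crossed homomorphism) from the subgroup `H` to the module `V`;
its values outside `H` are irrelevant. -/
def IsDer (H : Subgroup E) (d : E → V) : Prop :=
  ∀ x ∈ H, ∀ y ∈ H, d (x * y) = d x + x • d y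

/-- The conjugation action of a group on functions into a module. -/
def conjAct (g : E) (d : E → V) : E → V := fun x => g • d (g⁻¹ * x * g)

theorem conjAct_mul (g h : E) (d : E → V) : conjAct (g * h) d = conjAct g (conjAct h d) := by
  funext x
  simp [conjAct, mul_smul, mul_assoc]

theorem conjAct_one (d : E → V) : conjAct (1 : E) d = d := by
  funext x
  simp [conjAct]

theorem IsDer.mono {K H : Subgroup E} {d : E → V} (hd : IsDer H d) (h : K ≤ H) : IsDer K d :=
  fun x hx y hy => hd x (h hx) y (h hy)

theorem IsDer.map_one {H : Subgroup E} {d : E → V} (hd : IsDer H d) : d 1 = 0 := by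
  have := hd 1 H.one_mem 1 H.one_mem
  simpa using this

theorem IsDer.map_inv {H : Subgroup E} {d : E → V} (hd : IsDer H d) {x : E} (hx : x ∈ H) :
    d x⁻¹ = -(x⁻¹ • d x) := by
  have := hd x⁻¹ (H.inv_mem hx) x hx
  rw [inv_mul_cancel, hd.map_one] at this
  exact eq_neg_of_add_eq_zero_left this.symm

theorem IsDer.sub {H : Subgroup E} {d d' : E → V} (hd : IsDer H d) (hd' : IsDer H d') :
    IsDer H (fun x => d x - d' x) := by
  intro x hx y hy
  simp only [hd x hx y hy, hd' x hx y hy, smul_sub]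
  abel

theorem IsDer.nsmul {H : Subgroup E} {d : E → V} (hd : IsDer H d) (n : ℕ) :
    IsDer H (fun x => n • d x) := by
  intro x hx y hy
  simp only [hd x hx y hy, smul_add, smul_comm n x]

theorem IsDer.conj {K : Subgroup E} {d : E → V} (hd : IsDer K d) {g : E}
    (hg : ∀ x ∈ K, g⁻¹ * x * g ∈ K) : IsDer K (conjAct g d) := by
  intro x hx y hy
  have h1 : g⁻¹ * (x * y) * g = (g⁻¹ * x * g) * (g⁻¹ * y * g) := by group
  simp only [conjAct]
  rw [h1, hd _ (hg x hx) _ (hg y hy), smul_add, ← mul_smul, ← mul_smul]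
  congr 2
  group

/-- The subgroup on which a derivation vanishes. -/
def IsDer.zeros {H : Subgroup E} {d : E → V} (hd : IsDer H d) : Subgroup E where
  carrier := {x | x ∈ H ∧ d x = 0}
  one_mem' := ⟨H.one_mem, hd.map_one⟩
  mul_mem' := fun {x y} hx hy => ⟨H.mul_mem hx.1 hy.1, by rw [hd x hx.1 y hy.1, hx.2, hy.2]; simp⟩
  inv_mem' := fun {x} hx => ⟨H.inv_mem hx.1, by rw [hd.map_inv hx.1, hx.2]; simp⟩

theorem IsDer.mem_zeros {H : Subgroup E} {d : E → V} (hd : IsDer H d) {x : E} :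
    x ∈ hd.zeros ↔ x ∈ H ∧ d x = 0 := Iff.rfl

/-- On an element `x` acting trivially on `d x`, a derivation behaves like a homomorphism. -/
theorem IsDer.map_pow {H : Subgroup E} {d : E → V} (hd : IsDer H d) {x : E} (hx : x ∈ H)
    (hfix : x • d x = d x) (m : ℕ) : d (x ^ m) = m • d x := by
  induction m with
  | zero => simp [hd.map_one]
  | succ m ih =>
    rw [pow_succ', hd x hx _ (H.pow_mem hx m), ih, smul_comm, hfix, succ_nsmul']

theorem exists_nsmul_eq_zero_on_finset (htor : ∀ v : V, ∃ n : ℕ, 0 < n ∧ n • v = 0) {α : Type*}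
    (S : Finset α) (d : α → V) : ∃ n : ℕ, 0 < n ∧ ∀ x ∈ S, n • d x = 0 := by
  choose N hN h0 using htor
  refine ⟨∏ x ∈ S, N (d x), Finset.prod_pos fun x _ => hN _, fun x hx => ?_⟩
  obtain ⟨k, hk⟩ := Finset.dvd_prod_of_mem (fun x => N (d x)) hx
  rw [hk, mul_comm, mul_smul, h0, smul_zero]

theorem eq_zero_of_pow_nsmul {r : ℕ} (hr : ∀ v : V, r • v = 0 → v = 0) (j : ℕ) {v : V}
    (h : r ^ j • v = 0) : v = 0 := by
  induction j with
  | zero => simpa using h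
  | succ j ih =>
    rw [pow_succ', mul_smul] at h
    exact ih (hr _ h)

/-- On a torsion module with finite layers, multiplication by `r` is onto if it is injective. -/
theorem exists_nsmul_eq {r : ℕ} (hr : ∀ v : V, r • v = 0 → v = 0)
    (htor : ∀ v : V, ∃ n : ℕ, 0 < n ∧ n • v = 0)
    (hfin : ∀ n : ℕ, 0 < n → {v : V | n • v = 0}.Finite) (v : V) : ∃ w : V, r • w = v := by
  obtain ⟨n, hn, hv⟩ := htor v
  have hmaps : Set.MapsTo (fun w : V => r • w) {v : V | n • v = 0} {v : V | n • v = 0} := by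
    intro w hw
    change n • r • w = 0
    rw [smul_comm, show n • w = 0 from hw, smul_zero]
  have hinj : Set.InjOn (fun w : V => r • w) {v : V | n • v = 0} := by
    intro a _ b _ hab
    refine sub_eq_zero.1 (hr _ ?_)
    rw [smul_sub]
    exact sub_eq_zero.2 hab
  have himg := Set.eq_of_subset_of_ncard_le hmaps.image_subset
    (hinj.ncard_image).ge (hfin n hn)
  obtain ⟨w, _, hw⟩ := himg.ge hv
  exact ⟨w, hw⟩

theorem exists_pow_nsmul_eq {r : ℕ} (hr : ∀ v : V, r • v = 0 → v = 0)
    (htor : ∀ v : V, ∃ n : ℕ, 0 < n ∧ n • v = 0)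
    (hfin : ∀ n : ℕ, 0 < n → {v : V | n • v = 0}.Finite) (j : ℕ) (v : V) :
    ∃ w : V, r ^ j • w = v := by
  induction j with
  | zero => exact ⟨v, by simp⟩
  | succ j ih =>
    obtain ⟨w, rfl⟩ := ih
    obtain ⟨u, rfl⟩ := exists_nsmul_eq hr htor hfin w
    exact ⟨u, by rw [pow_succ, mul_smul]⟩

/-- Derivations on `H` that vanish on `E₀` are determined by their values on a finite set. -/
def FinitelyDetermined (V : Type*) [AddCommGroup V] [DistribMulAction E V]
    (E₀ H : Subgroup E) : Prop :=
  ∃ S : Finset E, (∀ x ∈ S, x ∈ H) ∧ ∀ d : E → V, IsDer H d → (∀ x ∈ E₀, d x = 0) →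
    (∀ x ∈ S, d x = 0) → ∀ x ∈ H, d x = 0

/-- Some positive multiple of `δ₀` extends from `E₀` to a derivation on `H`. -/
def MultipleExtends (E₀ H : Subgroup E) (δ₀ : E → V) : Prop :=
  ∃ n : ℕ, 0 < n ∧ ∃ d : E → V, IsDer H d ∧ ∀ x ∈ E₀, d x = n • δ₀ x

/-! ### Extending derivations over a cyclic factor -/

theorem FinitelyDetermined.cyclic {E₀ K H : Subgroup E} (hKH : K ≤ H) {g : E}
    (hg : g ∈ H) (hcyc : ∀ h ∈ H, ∃ k : ℤ, h * g ^ k ∈ K) (h2 : FinitelyDetermined V E₀ K) :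
    FinitelyDetermined V E₀ H := by
  classical
  obtain ⟨S, hS, hdet⟩ := h2
  refine ⟨insert g S, ?_, fun d hd h0 hdS h hh => ?_⟩
  · intro x hx
    rcases Finset.mem_insert.1 hx with rfl | hx
    · exact hg
    · exact hKH (hS x hx)
  · have hK := hdet d (hd.mono hKH) h0 fun x hx => hdS x (Finset.mem_insert_of_mem hx)
    obtain ⟨k, hk⟩ := hcyc h hh
    have h1 : h * g ^ k ∈ hd.zeros := ⟨hKH hk, hK _ hk⟩
    have h3 : g ∈ hd.zeros := ⟨hg, hdS g (Finset.mem_insert_self g S)⟩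
    have h4 := hd.zeros.mul_mem h1 (hd.zeros.inv_mem (hd.zeros.zpow_mem h3 k))
    rw [mul_inv_cancel_right] at h4
    exact h4.2

/-- The elements normalising `K` with respect to which `d` is equivariant on `K`. -/
def equivarianceSubgroup (K : Subgroup E) (d : E → V) : Subgroup E where
  carrier := {z | (∀ x, z * x * z⁻¹ ∈ K ↔ x ∈ K) ∧ ∀ x ∈ K, d (z * x * z⁻¹) = z • d x}
  one_mem' := by simp
  mul_mem' := by
    rintro a b ⟨ha, ha'⟩ ⟨hb, hb'⟩
    have h : ∀ x, a * b * x * (a * b)⁻¹ = a * (b * x * b⁻¹) * a⁻¹ := fun x => by group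
    refine ⟨fun x => by rw [h, ha, hb], fun x hx => ?_⟩
    rw [h, ha' _ ((hb x).2 hx), hb' x hx, mul_smul]
  inv_mem' := by
    rintro a ⟨ha, ha'⟩
    have h : ∀ x, a * (a⁻¹ * x * a⁻¹⁻¹) * a⁻¹ = x := fun x => by group
    have hK : ∀ x, a⁻¹ * x * a⁻¹⁻¹ ∈ K ↔ x ∈ K := fun x => by rw [← ha, h]
    refine ⟨hK, fun x hx => ?_⟩
    rw [eq_inv_smul_iff, ← ha' _ ((hK x).2 hx), h]

theorem conj_mem_iff_of_normal {K H : Subgroup E} (hnorm : ∀ x ∈ H, ∀ y ∈ K, x * y * x⁻¹ ∈ K)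
    {g : E} (hg : g ∈ H) (x : E) : g * x * g⁻¹ ∈ K ↔ x ∈ K := by
  refine ⟨fun h => ?_, hnorm g hg x⟩
  have := hnorm g⁻¹ (H.inv_mem hg) _ h
  simpa [mul_assoc] using this

/-- Extension over a cyclic factor generated by `g`: by finite determination some multiple of the
derivation on `K` is invariant under `g`, and it extends by zero on `g`. -/
theorem MultipleExtends.cyclic {E₀ K H : Subgroup E} {δ₀ : E → V}
    (htor : ∀ v : V, ∃ n : ℕ, 0 < n ∧ n • v = 0)
    (hE₀ : ∀ g : E, ∀ x ∈ E₀, g * x * g⁻¹ ∈ E₀)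
    (hequi : ∀ g : E, ∀ x ∈ E₀, δ₀ (g * x * g⁻¹) = g • δ₀ x) (hE₀K : E₀ ≤ K)
    (hKH : K ≤ H) (hnorm : ∀ x ∈ H, ∀ y ∈ K, x * y * x⁻¹ ∈ K) {g : E}
    (hg : g ∈ H) (hcyc : ∀ h ∈ H, ∃ k : ℤ, h * g ^ k ∈ K) (h2 : FinitelyDetermined V E₀ K)
    (h3 : MultipleExtends E₀ K δ₀) : MultipleExtends E₀ H δ₀ := by
  obtain ⟨S, hS, hdet⟩ := h2
  obtain ⟨n, hn, d₁, hd₁, hd₁0⟩ := h3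
  -- a multiple of `d₁` is invariant under `g`
  have hgK : ∀ x ∈ K, g⁻¹ * x * g ∈ K := fun x hx => by
    simpa using hnorm g⁻¹ (H.inv_mem hg) x hx
  obtain ⟨N, hN, hNS⟩ := exists_nsmul_eq_zero_on_finset htor S
    (fun x => conjAct g d₁ x - d₁ x)
  have hinv : ∀ x ∈ K, N • (conjAct g d₁ x - d₁ x) = 0 := by
    refine hdet _ (((hd₁.conj hgK).sub hd₁).nsmul N) (fun x hx => ?_) hNS
    have h1 : g⁻¹ * x * g ∈ E₀ := by simpa using hE₀ g⁻¹ x hx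
    have h2 := hequi g _ h1
    rw [show g * (g⁻¹ * x * g) * g⁻¹ = x by group] at h2
    simp only [conjAct]
    rw [hd₁0 _ h1, hd₁0 _ hx, h2, smul_comm g n, sub_self, smul_zero]
  let d₂ : E → V := fun x => N • d₁ x
  have hd₂ : IsDer K d₂ := hd₁.nsmul N
  -- and a further multiple vanishes on the intersection of `K` with `⟨g⟩`
  obtain ⟨a, ha⟩ := Int.subgroup_cyclic
    { carrier := {k : ℤ | g ^ k ∈ K}
      zero_mem' := by simp
      add_mem' := fun {k l} hk hl => by
        have h : g ^ (k + l) ∈ K := by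
          rw [zpow_add]
          exact K.mul_mem hk hl
        exact h
      neg_mem' := fun {k} hk => by
        have h : g ^ (-k) ∈ K := by
          rw [zpow_neg]
          exact K.inv_mem hk
        exact h }
  have hgen : ∀ k : ℤ, g ^ k ∈ K ↔ k ∈ AddSubgroup.closure {a} := fun k => by rw [← ha]; rfl
  obtain ⟨M, hM, hMa⟩ := htor (d₂ (g ^ a))
  let d₃ : E → V := fun x => M • d₂ x
  have hd₃ : IsDer K d₃ := hd₂.nsmul M
  have hzero : ∀ k : ℤ, g ^ k ∈ K → d₃ (g ^ k) = 0 := by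
    intro k hk
    obtain ⟨l, rfl⟩ := AddSubgroup.mem_closure_singleton.1 ((hgen k).1 hk)
    have h1 : g ^ a ∈ hd₃.zeros :=
      ⟨(hgen a).2 (AddSubgroup.subset_closure rfl), hMa⟩
    have h2 := hd₃.zeros.zpow_mem h1 l
    rw [← zpow_mul, mul_comm, ← smul_eq_mul] at h2
    exact h2.2
  have hgeq : g ∈ equivarianceSubgroup K d₃ := by
    refine ⟨conj_mem_iff_of_normal hnorm hg, fun x hx => ?_⟩
    have h1 := hinv _ (hnorm g hg x hx)
    rw [smul_sub, sub_eq_zero] at h1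
    simp only [conjAct] at h1
    rw [show g⁻¹ * (g * x * g⁻¹) * g = x by group] at h1
    change M • N • d₁ (g * x * g⁻¹) = g • M • N • d₁ x
    rw [← h1, smul_comm g M, smul_comm g N]
  choose! κ hκ using hcyc
  have hwell : ∀ (h : E) (k l : ℤ), h * g ^ k ∈ K → h * g ^ l ∈ K →
      d₃ (h * g ^ k) = d₃ (h * g ^ l) := by
    intro h k l hk hl
    have h1 : g ^ (l - k) ∈ K := by
      have := K.mul_mem (K.inv_mem hk) hl
      rw [show (h * g ^ k)⁻¹ * (h * g ^ l) = g ^ (l - k) by group] at this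
      exact this
    have h2 := hd₃ _ hk _ h1
    rw [hzero _ h1, smul_zero, add_zero] at h2
    rw [← h2]
    congr 1
    group
  refine ⟨M * (N * n), by positivity, fun h => d₃ (h * g ^ κ h), fun x hx y hy => ?_,
    fun x hx => ?_⟩
  · have hxy := hκ _ (H.mul_mem hx hy)
    have hx' := hκ _ hx
    have hy' := hκ _ hy
    obtain ⟨hc, hc'⟩ := (equivarianceSubgroup K d₃).zpow_mem hgeq (-κ x)
    have hu := (hc (y * g ^ κ y)).2 hy'
    have hsplit : x * y * g ^ (κ x + κ y) =
        (x * g ^ κ x) * (g ^ (-κ x) * (y * g ^ κ y) * (g ^ (-κ x))⁻¹) := by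
      rw [add_comm]
      group
    have hxy' : x * y * g ^ (κ x + κ y) ∈ K := by
      rw [hsplit]
      exact K.mul_mem hx' hu
    change d₃ (x * y * g ^ κ (x * y)) = _
    rw [hwell _ _ _ hxy hxy', hsplit, hd₃ _ hx' _ hu, hc' _ hy']
    congr 1
    rw [← mul_smul]
    congr 1
    group
  · have h1 := hwell x (κ x) 0 (hκ x (hKH (hE₀K hx))) (by simpa using hE₀K hx)
    rw [zpow_zero, mul_one] at h1
    change d₃ (x * g ^ κ x) = _
    rw [h1]
    change M • N • d₁ x = _
    rw [hd₁0 x hx, mul_smul, mul_smul]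

end Derivations

/-! ### Divisible factors move derivations by inner derivations -/

section Divisible

/-- A divisible factor `H / K` has no nontrivial homomorphic image that is finite; the pigeonhole
principle is applied to powers of a root `y` of a given element. -/
theorem le_of_divisible_of_finite {E α : Type*} [Group E] {K H U : Subgroup E}
    (hdiv : ∀ x ∈ H, ∀ n : ℕ, 0 < n → ∃ y ∈ H, x⁻¹ * y ^ n ∈ K) (hKU : K ≤ U) (F : E → α)
    (hF : (F '' (H : Set E)).Finite) (hFU : ∀ g ∈ H, ∀ h ∈ H, F g = F h → g⁻¹ * h ∈ U) :
    H ≤ U := by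
  intro x hx
  set B := (F '' (H : Set E)).ncard
  obtain ⟨y, hy, hxy⟩ := hdiv x hx B.factorial (Nat.factorial_pos _)
  obtain ⟨i, hi, j, hj, hij, hFij⟩ := Set.exists_ne_map_eq_of_ncard_lt_of_maps_to
    (s := (Finset.range (B + 1) : Set ℕ)) (t := F '' (H : Set E)) (f := fun i => F (y ^ i))
    (by rw [Set.ncard_coe_finset, Finset.card_range]; exact Nat.lt_succ_self _)
    (fun i _ => ⟨y ^ i, H.pow_mem hy i, rfl⟩) hF
  have key : ∀ i j : ℕ, i < j → j ≤ B → F (y ^ i) = F (y ^ j) → x ∈ U := by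
    intro i j hij hj hFij
    have h1 := hFU _ (H.pow_mem hy i) _ (H.pow_mem hy j) hFij
    obtain ⟨k, rfl⟩ := Nat.exists_eq_add_of_lt hij
    rw [show i + k + 1 = i + (k + 1) by ring, pow_add, inv_mul_cancel_left] at h1
    obtain ⟨m, hm⟩ := Nat.dvd_factorial (Nat.succ_pos k) (by omega : k + 1 ≤ B)
    rw [hm, pow_mul] at hxy
    have h2 := U.mul_mem (U.pow_mem h1 m) (U.inv_mem (hKU hxy))
    simpa using h2
  simp only [Finset.coe_range, Set.mem_Iio] at hi hj
  rcases lt_or_gt_of_ne hij with h | h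
  · exact key i j h (by omega) hFij
  · exact key j i h (by omega) hFij.symm

variable {E V : Type*} [Group E] [AddCommGroup V] [DistribMulAction E V]

/-- A divisible factor `H / K` fixes every vector fixed by `K`: the orbit lies in a finite layer of
`V`, and a divisible group has no proper subgroup of finite index. -/
theorem smul_eq_of_divisible {K H : Subgroup E}
    (htor : ∀ v : V, ∃ n : ℕ, 0 < n ∧ n • v = 0)
    (hfin : ∀ n : ℕ, 0 < n → {v : V | n • v = 0}.Finite)
    (hdiv : ∀ x ∈ H, ∀ n : ℕ, 0 < n → ∃ y ∈ H, x⁻¹ * y ^ n ∈ K)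
    {v : V} (hv : ∀ k ∈ K, k • v = v) : ∀ h ∈ H, h • v = v := by
  obtain ⟨n, hn, hnv⟩ := htor v
  have := le_of_divisible_of_finite (U := MulAction.stabilizer E v) hdiv (fun k hk => hv k hk)
    (fun g => g • v) ((hfin n hn).subset ?_) ?_
  · exact fun h hh => this hh
  · rintro _ ⟨g, _, rfl⟩
    change n • g • v = 0
    rw [smul_comm, hnv, smul_zero]
  · intro g _ h _ hgh
    change (g⁻¹ * h) • v = v
    have hgh' : g • v = h • v := hgh
    rw [mul_smul, ← hgh', inv_smul_smul]

/-- A derivation on `H` that vanishes on `K` is a homomorphism from an `r`-primary group to a group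
without `r`-torsion, hence zero; so no further values are needed to determine derivations on `H`. -/
theorem FinitelyDetermined.divisible {r : ℕ} (hr : ∀ v : V, r • v = 0 → v = 0)
    (htor : ∀ v : V, ∃ n : ℕ, 0 < n ∧ n • v = 0)
    (hfin : ∀ n : ℕ, 0 < n → {v : V | n • v = 0}.Finite) {E₀ K H : Subgroup E} (hKH : K ≤ H)
    (hnorm : ∀ x ∈ H, ∀ y ∈ K, x * y * x⁻¹ ∈ K) (hdiv : IsDivisibleFactor r K H)
    (h2 : FinitelyDetermined V E₀ K) : FinitelyDetermined V E₀ H := by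
  obtain ⟨S, hS, hdet⟩ := h2
  refine ⟨S, fun x hx => hKH (hS x hx), fun d hd h0 hdS h hh => ?_⟩
  have hK := hdet d (hd.mono hKH) h0 hdS
  have hfix : ∀ k ∈ K, k • d h = d h := by
    intro k hk
    have hk' : h⁻¹ * k * h ∈ K := by simpa using hnorm h⁻¹ (H.inv_mem hh) k hk
    have e1 := hd h hh _ (hKH hk')
    have e2 := hd k (hKH hk) h hh
    rw [show h * (h⁻¹ * k * h) = k * h by group, e2, hK _ hk, hK _ hk', zero_add, smul_zero,
      add_zero] at e1
    exact e1
  obtain ⟨j, hj⟩ := hdiv.2.2.1 h hh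
  have h1 := hd.map_pow hh (smul_eq_of_divisible htor hfin hdiv.2.1 hfix h hh) (r ^ j)
  rw [hK _ hj] at h1
  exact eq_zero_of_pow_nsmul hr j h1.symm

/-- `d` agrees on `K` with the inner derivation given by some vector. -/
def IsInnerOn (K : Subgroup E) (d : E → V) : Prop := ∃ v : V, ∀ x ∈ K, d x = x • v - v

theorem IsInnerOn.add {K : Subgroup E} {d d' : E → V} (h : IsInnerOn K d) (h' : IsInnerOn K d') :
    IsInnerOn K (fun x => d x + d' x) := by
  obtain ⟨v, hv⟩ := h
  obtain ⟨w, hw⟩ := h'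
  refine ⟨v + w, fun x hx => ?_⟩
  simp only [hv x hx, hw x hx, smul_add]
  abel

theorem IsInnerOn.neg {K : Subgroup E} {d : E → V} (h : IsInnerOn K d) :
    IsInnerOn K (fun x => -d x) := by
  obtain ⟨v, hv⟩ := h
  refine ⟨-v, fun x hx => ?_⟩
  simp only [hv x hx, smul_neg]
  abel

theorem IsInnerOn.congr {K : Subgroup E} {d d' : E → V} (h : IsInnerOn K d)
    (hdd : ∀ x ∈ K, d' x = d x) : IsInnerOn K d' := by
  obtain ⟨v, hv⟩ := h
  exact ⟨v, fun x hx => (hdd x hx).trans (hv x hx)⟩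

theorem IsInnerOn.conj {K : Subgroup E} {d : E → V} (h : IsInnerOn K d) {g : E}
    (hg : ∀ x ∈ K, g⁻¹ * x * g ∈ K) : IsInnerOn K (conjAct g d) := by
  obtain ⟨v, hv⟩ := h
  refine ⟨g • v, fun x hx => ?_⟩
  simp only [conjAct]
  rw [hv _ (hg x hx), smul_sub, ← mul_smul, ← mul_smul]
  congr 2
  group

/-- An element `x` of `K` moves a derivation `d` on `K` by the inner derivation of `d x`. -/
theorem IsDer.conjAct_sub_eq {K : Subgroup E} {d : E → V} (hd : IsDer K d) {x : E}
    (hx : x ∈ K) {y : E} (hy : y ∈ K) : conjAct x d y - d y = y • d x - d x := by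
  simp only [conjAct]
  rw [hd _ (K.mul_mem (K.inv_mem hx) hy) _ hx, hd _ (K.inv_mem hx) _ hy, hd.map_inv hx]
  simp only [smul_add, smul_neg, ← mul_smul, mul_inv_cancel, mul_inv_cancel_left, one_smul]
  abel

theorem IsDer.isInnerOn_conjAct_sub {K : Subgroup E} {d : E → V} (hd : IsDer K d) {x : E}
    (hx : x ∈ K) : IsInnerOn K (fun y => conjAct x d y - d y) :=
  ⟨d x, fun _ hy => hd.conjAct_sub_eq hx hy⟩

/-- The elements of `H` that move `d` only by an inner derivation on `K`. -/
def innerSubgroup {K H : Subgroup E} (hnorm : ∀ x ∈ H, ∀ y ∈ K, x * y * x⁻¹ ∈ K)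
    (d : E → V) : Subgroup E where
  carrier := {g | g ∈ H ∧ IsInnerOn K (fun x => conjAct g d x - d x)}
  one_mem' := ⟨H.one_mem, 0, fun x _ => by simp [conjAct_one]⟩
  mul_mem' := by
    rintro a b ⟨ha, ha'⟩ ⟨hb, hb'⟩
    have hK : ∀ x ∈ K, a⁻¹ * x * a ∈ K := fun x hx => by simpa using hnorm a⁻¹ (H.inv_mem ha) x hx
    refine ⟨H.mul_mem ha hb, ((hb'.conj hK).add ha').congr fun x _ => ?_⟩
    rw [conjAct_mul]
    simp only [conjAct, smul_sub]
    abel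
  inv_mem' := by
    rintro a ⟨ha, ha'⟩
    have hK : ∀ x ∈ K, a⁻¹⁻¹ * x * a⁻¹ ∈ K := fun x hx => by simpa using hnorm a ha x hx
    refine ⟨H.inv_mem ha, (ha'.conj hK).neg.congr fun x _ => ?_⟩
    have h1 : conjAct a⁻¹ (conjAct a d) x = d x := by
      rw [← conjAct_mul, inv_mul_cancel, conjAct_one]
    rw [← h1]
    simp only [conjAct, smul_sub]
    abel

theorem mem_innerSubgroup {K H : Subgroup E} {hnorm : ∀ x ∈ H, ∀ y ∈ K, x * y * x⁻¹ ∈ K}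
    {d : E → V} {g : E} : g ∈ innerSubgroup hnorm d ↔
      g ∈ H ∧ IsInnerOn K (fun x => conjAct g d x - d x) := Iff.rfl

/-- A divisible factor acts trivially, modulo inner derivations, on the derivations of `K` that
vanish on `E₀`: by finite determination such a derivation has only finitely many conjugates. -/
theorem isInnerOn_conjAct_sub_of_divisible
    (htor : ∀ v : V, ∃ n : ℕ, 0 < n ∧ n • v = 0)
    (hfin : ∀ n : ℕ, 0 < n → {v : V | n • v = 0}.Finite) {E₀ K H : Subgroup E}
    (hE₀ : ∀ g : E, ∀ x ∈ E₀, g * x * g⁻¹ ∈ E₀) (hKH : K ≤ H)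
    (hnorm : ∀ x ∈ H, ∀ y ∈ K, x * y * x⁻¹ ∈ K)
    (hdiv : ∀ x ∈ H, ∀ n : ℕ, 0 < n → ∃ y ∈ H, x⁻¹ * y ^ n ∈ K)
    (h2 : FinitelyDetermined V E₀ K) {c : E → V} (hc : IsDer K c) (hc0 : ∀ x ∈ E₀, c x = 0)
    {g : E} (hg : g ∈ H) : IsInnerOn K (fun x => conjAct g c x - c x) := by
  obtain ⟨S, hS, hdet⟩ := h2
  obtain ⟨N, hN, hNS⟩ := exists_nsmul_eq_zero_on_finset htor S c
  have hNK : ∀ x ∈ K, N • c x = 0 :=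
    hdet _ (hc.nsmul N) (fun x hx => by rw [hc0 x hx, smul_zero]) hNS
  have hconj : ∀ g ∈ H, ∀ x ∈ K, g⁻¹ * x * g ∈ K := fun g hg x hx => by
    simpa using hnorm g⁻¹ (H.inv_mem hg) x hx
  have hconj0 : ∀ g, ∀ x ∈ E₀, conjAct g c x = 0 := fun g x hx => by
    have h1 : g⁻¹ * x * g ∈ E₀ := by simpa using hE₀ g⁻¹ x hx
    simp only [conjAct]
    rw [hc0 _ h1, smul_zero]
  have := le_of_divisible_of_finite (U := innerSubgroup hnorm c) hdiv
    (fun k hk => ⟨hKH hk, hc.isInnerOn_conjAct_sub hk⟩)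
    (fun g => fun s : S => conjAct g c s) ?_ ?_
  · exact (this hg).2
  · refine Set.Finite.subset (Set.Finite.pi' (fun _ : S => hfin N hN)) ?_
    rintro _ ⟨g, hg, rfl⟩ s
    simp only [conjAct, Set.mem_ofPred_eq]
    rw [smul_comm, hNK _ (hconj g hg s (hS s s.2)), smul_zero]
  · intro g hg h hh hgh
    have heq : ∀ x ∈ K, conjAct g c x - conjAct h c x = 0 := by
      refine hdet _ ((hc.conj (hconj g hg)).sub (hc.conj (hconj h hh)))
        (fun x hx => ?_) fun x hx => ?_
      · rw [hconj0 g x hx, hconj0 h x hx, sub_zero]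
      · rw [sub_eq_zero]
        exact congrFun hgh ⟨x, hx⟩
    refine ⟨H.mul_mem (H.inv_mem hg) hh, 0, fun x hx => ?_⟩
    have h1 := heq _ (hnorm g hg x hx)
    rw [sub_eq_zero] at h1
    have h3 : conjAct (g⁻¹ * h) c x = c x := by
      rw [conjAct_mul]
      have : c x = conjAct g⁻¹ (conjAct g c) x := by
        rw [← conjAct_mul, inv_mul_cancel, conjAct_one]
      rw [this]
      simp only [conjAct] at h1 ⊢
      rw [inv_inv, ← h1]
    simp [h3]

/-- The derivation `d` on `K`, whose restriction to `E₀` is invariant, is moved by all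
of `H` only by inner derivations. -/
theorem isInnerOn_conjAct_sub {r : ℕ} (hr : ∀ v : V, r • v = 0 → v = 0)
    (htor : ∀ v : V, ∃ n : ℕ, 0 < n ∧ n • v = 0)
    (hfin : ∀ n : ℕ, 0 < n → {v : V | n • v = 0}.Finite) {E₀ K H : Subgroup E}
    (hE₀ : ∀ g : E, ∀ x ∈ E₀, g * x * g⁻¹ ∈ E₀) (hKH : K ≤ H)
    (hnorm : ∀ x ∈ H, ∀ y ∈ K, x * y * x⁻¹ ∈ K) (hdiv : IsDivisibleFactor r K H)
    (h2 : FinitelyDetermined V E₀ K) {d : E → V} (hd : IsDer K d)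
    (hd0 : ∀ g : E, ∀ x ∈ E₀, conjAct g d x = d x) {g : E} (hg : g ∈ H) :
    IsInnerOn K (fun x => conjAct g d x - d x) := by
  have hconj : ∀ g ∈ H, ∀ x ∈ K, g⁻¹ * x * g ∈ K := fun g hg x hx => by
    simpa using hnorm g⁻¹ (H.inv_mem hg) x hx
  have hcK : IsDer K (fun x => conjAct g d x - d x) := (hd.conj (hconj g hg)).sub hd
  -- modulo inner derivations, `g ↦ conjAct g d - d` is a homomorphism
  have hpow : ∀ m : ℕ, IsInnerOn K
      (fun x => (conjAct (g ^ m) d x - d x) - m • (conjAct g d x - d x)) := by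
    intro m
    induction m with
    | zero => exact ⟨0, fun x _ => by simp [conjAct_one]⟩
    | succ m ih =>
      have h1 := isInnerOn_conjAct_sub_of_divisible htor hfin hE₀ hKH hnorm hdiv.2.1 h2 hcK
        (fun x hx => by rw [hd0 g x hx, sub_self]) (H.pow_mem hg m)
      refine (h1.add ih).congr fun x hx => ?_
      rw [pow_succ, conjAct_mul, succ_nsmul]
      simp only [conjAct, smul_sub]
      abel
  obtain ⟨j, hj⟩ := hdiv.2.2.1 g hg
  obtain ⟨v, hv⟩ := (hd.isInnerOn_conjAct_sub hj).add (hpow (r ^ j)).neg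
  obtain ⟨w, rfl⟩ := exists_pow_nsmul_eq hr htor hfin j v
  refine ⟨w, fun x hx => sub_eq_zero.1 (eq_zero_of_pow_nsmul hr j ?_)⟩
  have := hv x hx
  beta_reduce at this
  rw [smul_sub _ (_ - _) (_ - _), smul_sub _ (x • w), smul_comm _ x w, ← this]
  abel

end Divisible

/-! ### Central extensions by torsion groups -/

section CentralExtension

/-- A central extension `W` of `B` by a torsion abelian group splits uniquely as a direct product
when `r`-th powers are bijective on `B` and `W / B` is `r`-primary. -/
theorem central_extension_split {W : Type*} [Group W] {B : Subgroup W} {r : ℕ}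
    (hcent : ∀ b ∈ B, ∀ w : W, b * w = w * b)
    (hcomm : ∀ x y : W, x * y * x⁻¹ * y⁻¹ ∈ B) (htor : ∀ w : W, ∃ j : ℕ, w ^ r ^ j ∈ B)
    (hinj : ∀ b ∈ B, b ^ r = 1 → b = 1) (hsurj : ∀ b ∈ B, ∃ c ∈ B, c ^ r = b) :
    (∀ x y : W, x * y = y * x) ∧ (∀ w : W, ∃ b ∈ B, ∃ j : ℕ, (b * w) ^ r ^ j = 1) ∧
      ∀ b ∈ B, ∀ j : ℕ, b ^ r ^ j = 1 → b = 1 := by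
  have hinj' : ∀ j : ℕ, ∀ b ∈ B, b ^ r ^ j = 1 → b = 1 := by
    intro j
    induction j with
    | zero => intro b _ h; simpa using h
    | succ j ih =>
      intro b hb h
      rw [pow_succ, pow_mul] at h
      exact ih b hb (hinj _ (B.pow_mem hb _) h)
  have hsurj' : ∀ j : ℕ, ∀ b ∈ B, ∃ c ∈ B, c ^ r ^ j = b := by
    intro j
    induction j with
    | zero => intro b hb; exact ⟨b, hb, by simp⟩
    | succ j ih =>
      intro b hb
      obtain ⟨c, hc, rfl⟩ := ih b hb
      obtain ⟨e, he, rfl⟩ := hsurj c hc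
      exact ⟨e, he, by rw [pow_succ', pow_mul]⟩
  refine ⟨fun x y => ?_, fun w => ?_, fun b hb j => hinj' j b hb⟩
  · -- commutation with `y` is a homomorphism into the centre
    have hpow : ∀ m : ℕ, x ^ m * y * (x ^ m)⁻¹ * y⁻¹ = (x * y * x⁻¹ * y⁻¹) ^ m := by
      intro m
      induction m with
      | zero => simp
      | succ m ih =>
        have h1 := hcent _ (hcomm (x ^ m) y) x
        rw [pow_succ (x * y * x⁻¹ * y⁻¹), ← ih]
        calc x ^ (m + 1) * y * (x ^ (m + 1))⁻¹ * y⁻¹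
            = x * (x ^ m * y * (x ^ m)⁻¹ * y⁻¹) * (y * x⁻¹ * y⁻¹) := by
              rw [pow_succ']
              group
          _ = (x ^ m * y * (x ^ m)⁻¹ * y⁻¹) * x * (y * x⁻¹ * y⁻¹) := by rw [h1]
          _ = _ := by group
    obtain ⟨j, hj⟩ := htor x
    have h1 := hinj' j _ (hcomm x y) (by
      rw [← hpow, hcent _ hj, mul_inv_cancel_right, mul_inv_cancel])
    rw [mul_assoc (x * y), ← mul_inv_rev, mul_inv_eq_one] at h1
    exact h1
  · obtain ⟨j, hj⟩ := htor w
    obtain ⟨c, hc, hcw⟩ := hsurj' j _ hj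
    refine ⟨c⁻¹, B.inv_mem hc, j, ?_⟩
    rw [(show Commute c⁻¹ w from hcent _ (B.inv_mem hc) w).mul_pow, inv_pow, hcw, inv_mul_cancel]

/-- The same statement for a quotient `P / N`. -/
theorem central_extension_split_quotient {P : Type*} [Group P] {N B : Subgroup P} [N.Normal]
    {r : ℕ} (hcent : ∀ b ∈ B, ∀ w : P, b * w = w * b)
    (hcomm : ∀ x y : P, ∃ b ∈ B, b⁻¹ * (x * y * x⁻¹ * y⁻¹) ∈ N)
    (htor : ∀ w : P, ∃ j : ℕ, ∃ b ∈ B, b⁻¹ * w ^ r ^ j ∈ N)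
    (hinj : ∀ b ∈ B, b ^ r ∈ N → b ∈ N) (hsurj : ∀ b ∈ B, ∃ c ∈ B, c ^ r = b) :
    (∃ T : Subgroup P, ∀ x, x ∈ T ↔ ∃ j : ℕ, x ^ r ^ j ∈ N) ∧
      (∀ w : P, ∃ b ∈ B, ∃ j : ℕ, (b * w) ^ r ^ j ∈ N) ∧
      ∀ b ∈ B, ∀ j : ℕ, b ^ r ^ j ∈ N → b ∈ N := by
  have hmem : ∀ x : P, (x : P ⧸ N) = 1 ↔ x ∈ N := fun x => QuotientGroup.eq_one_iff x
  have hB : ∀ x b : P, b ∈ B → b⁻¹ * x ∈ N → (x : P ⧸ N) ∈ B.map (QuotientGroup.mk' N) :=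
    fun x b hb h => ⟨b, hb, QuotientGroup.eq.2 h⟩
  obtain ⟨h1, h2, h3⟩ := central_extension_split (W := P ⧸ N) (B := B.map (QuotientGroup.mk' N))
    (r := r)
    (by
      rintro _ ⟨b, hb, rfl⟩ w
      obtain ⟨w, rfl⟩ := QuotientGroup.mk_surjective w
      exact congrArg (QuotientGroup.mk : P → P ⧸ N) (hcent b hb w))
    (by
      intro x y
      obtain ⟨x, rfl⟩ := QuotientGroup.mk_surjective x
      obtain ⟨y, rfl⟩ := QuotientGroup.mk_surjective y
      obtain ⟨b, hb, h⟩ := hcomm x y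
      exact hB _ b hb h)
    (by
      intro w
      obtain ⟨w, rfl⟩ := QuotientGroup.mk_surjective w
      obtain ⟨j, b, hb, h⟩ := htor w
      exact ⟨j, hB _ b hb h⟩)
    (by
      rintro _ ⟨b, hb, rfl⟩ h
      exact (hmem b).2 (hinj b hb ((hmem _).1 h)))
    (by
      rintro _ ⟨b, hb, rfl⟩
      obtain ⟨c, hc, rfl⟩ := hsurj b hb
      exact ⟨_, ⟨c, hc, rfl⟩, (map_pow _ _ _).symm⟩)
  refine ⟨⟨{ carrier := {x | ∃ j : ℕ, x ^ r ^ j ∈ N}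
             one_mem' := ⟨0, by simp⟩
             mul_mem' := ?_
             inv_mem' := ?_ }, fun x => Iff.rfl⟩, fun w => ?_, fun b hb j hj => ?_⟩
  · rintro x y ⟨i, hi⟩ ⟨j, hj⟩
    refine ⟨i + j, ?_⟩
    rw [← hmem] at hi hj ⊢
    rw [QuotientGroup.mk_pow] at hi hj ⊢
    rw [QuotientGroup.mk_mul, (show Commute (x : P ⧸ N) y from h1 _ _).mul_pow, pow_add,
      pow_mul, hi, one_pow, one_mul, mul_comm, pow_mul, hj, one_pow]
  · rintro x ⟨j, hj⟩
    exact ⟨j, by rw [inv_pow]; exact N.inv_mem hj⟩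
  · obtain ⟨_, ⟨b, hb, rfl⟩, j, hj⟩ := h2 w
    refine ⟨b, hb, j, ?_⟩
    rw [← hmem]
    exact hj
  · rw [← hmem]
    refine h3 _ ⟨b, hb, rfl⟩ j ?_
    exact (hmem _).2 hj

variable {E V : Type*} [Group E] [AddCommGroup V] [DistribMulAction E V]

variable (E V) in
/-- The action of `E` on the module `V`, written multiplicatively. -/
def moduleAut : E →* MulAut (Multiplicative V) :=
  (MulAutMultiplicative V).symm.toMonoidHom.comp (DistribMulAction.toAddAut E V)

theorem moduleAut_apply (g : E) (v : Multiplicative V) :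
    moduleAut E V g v = Multiplicative.ofAdd (g • v.toAdd) := rfl

/-- The subgroup of `V ⋊ H` of all pairs `(v, g)` such that `g` moves `d` by the inner derivation
of `v`. A derivation on `H` extending `d` is a section of this group over `H` that extends the
graph of `d`. -/
def extensionGroup {K H : Subgroup E} (hnorm : ∀ x ∈ H, ∀ y ∈ K, x * y * x⁻¹ ∈ K) (d : E → V) :
    Subgroup (Multiplicative V ⋊[moduleAut E V] E) where
  carrier := {p | p.right ∈ H ∧ ∀ x ∈ K, conjAct p.right d x - d x =
    x • p.left.toAdd - p.left.toAdd}
  one_mem' := ⟨H.one_mem, fun x _ => by simp [conjAct_one]⟩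
  mul_mem' := by
    rintro p q ⟨hp, hp'⟩ ⟨hq, hq'⟩
    refine ⟨H.mul_mem hp hq, fun x hx => ?_⟩
    have hxp : p.right⁻¹ * x * p.right ∈ K := by
      simpa using hnorm p.right⁻¹ (H.inv_mem hp) x hx
    have h1 := congrArg (p.right • ·) (hq' _ hxp)
    have h2 := hp' x hx
    simp only [smul_sub, ← mul_smul, mul_inv_cancel_left, mul_assoc] at h1
    rw [SemidirectProduct.mul_right, SemidirectProduct.mul_left, conjAct_mul, moduleAut_apply]
    simp only [toAdd_mul, toAdd_ofAdd, smul_add, ← mul_smul]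
    have h3 : conjAct p.right (conjAct q.right d) x - conjAct p.right d x =
      (x * p.right) • q.left.toAdd - p.right • q.left.toAdd := by
      rw [← h1]
      simp only [conjAct, mul_assoc]
    rw [← sub_add_sub_cancel _ (conjAct p.right d x), h2, h3]
    abel
  inv_mem' := by
    rintro p ⟨hp, hp'⟩
    refine ⟨H.inv_mem hp, fun x hx => ?_⟩
    have h1 := congrArg (p.right⁻¹ • ·) (hp' _ (hnorm p.right hp x hx))
    simp only [conjAct] at h1 ⊢
    rw [show p.right⁻¹ * (p.right * x * p.right⁻¹) * p.right = x by group] at h1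
    simp only [smul_sub, ← mul_smul] at h1
    rw [SemidirectProduct.inv_right, SemidirectProduct.inv_left, moduleAut_apply]
    simp only [toAdd_inv, toAdd_ofAdd, inv_inv, smul_neg, ← mul_smul]
    simp only [mul_assoc, inv_mul_cancel_left, inv_mul_cancel, one_smul] at h1 ⊢
    rw [← neg_inj, neg_sub, h1]
    abel

end CentralExtension

/-! ### Extending derivations over a divisible factor -/

section Extend

variable {E V : Type*} [Group E] [AddCommGroup V] [DistribMulAction E V]

/-- A derivation on `K` which every element of `H` moves by an inner derivation extends to `H`
when `H / K` is divisible: modulo the graph of `d`, the group `extensionGroup` is a central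
extension of the fixed points of `K` in `V` by the `r`-primary group `H / K`, and the complement
formed by the `r`-primary elements is the graph of the extension. -/
theorem exists_extension_of_divisible {r : ℕ} (hr : ∀ v : V, r • v = 0 → v = 0)
    (htor : ∀ v : V, ∃ n : ℕ, 0 < n ∧ n • v = 0)
    (hfin : ∀ n : ℕ, 0 < n → {v : V | n • v = 0}.Finite) {K H : Subgroup E} (hKH : K ≤ H)
    (hnorm : ∀ x ∈ H, ∀ y ∈ K, x * y * x⁻¹ ∈ K) (hdiv : IsDivisibleFactor r K H)
    {d : E → V} (hd : IsDer K d)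
    (hinner : ∀ g ∈ H, IsInnerOn K (fun x => conjAct g d x - d x)) :
    ∃ δ : E → V, IsDer H δ ∧ ∀ x ∈ K, δ x = d x := by
  let X := extensionGroup hnorm d
  have hX : ∀ p : Multiplicative V ⋊[moduleAut E V] E, p ∈ X ↔ p.right ∈ H ∧
    ∀ x ∈ K, conjAct p.right d x - d x = x • p.left.toAdd - p.left.toAdd := fun p => Iff.rfl
  have hleft : ∀ p q : X, (p * q).1.left.toAdd = p.1.left.toAdd + p.1.right • q.1.left.toAdd :=
    fun p q => rfl
  have hright : ∀ p q : X, (p * q).1.right = p.1.right * q.1.right := fun p q => rfl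
  have hext : ∀ p q : X, p.1.left.toAdd = q.1.left.toAdd → p.1.right = q.1.right → p = q :=
    fun p q h1 h2 => Subtype.ext (SemidirectProduct.ext h1 h2)
  let R : X →* E := SemidirectProduct.rightHom.comp X.subtype
  have hR : ∀ p : X, R p = p.1.right := fun p => rfl
  -- the graph of `d`
  let N : Subgroup X :=
    { carrier := {p | p.1.right ∈ K ∧ p.1.left.toAdd = d p.1.right}
      one_mem' := ⟨K.one_mem, hd.map_one.symm⟩
      mul_mem' := by
        rintro p q ⟨hp, hp'⟩ ⟨hq, hq'⟩
        refine ⟨K.mul_mem hp hq, ?_⟩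
        rw [hleft, hright, hd _ hp _ hq, hp', hq']
      inv_mem' := by
        rintro p ⟨hp, hp'⟩
        refine ⟨K.inv_mem hp, ?_⟩
        have h1 : (p⁻¹).1.left.toAdd = -(p.1.right⁻¹ • p.1.left.toAdd) := smul_neg _ _
        rw [h1, hp']
        exact (hd.map_inv hp).symm }
  have hN : ∀ p : X, p ∈ N ↔ p.1.right ∈ K ∧ p.1.left.toAdd = d p.1.right := fun p => Iff.rfl
  have hNmk : ∀ k ∈ K, ∃ p ∈ N, p.1.right = k := fun k hk =>
    ⟨⟨⟨Multiplicative.ofAdd (d k), k⟩, hKH hk, fun x hx => hd.conjAct_sub_eq hk hx⟩,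
      ⟨hk, rfl⟩, rfl⟩
  have hNnormal : N.Normal := by
    refine ⟨fun n hn g => ?_⟩
    have hk : g.1.right * n.1.right * g.1.right⁻¹ ∈ K := hnorm _ g.2.1 _ hn.1
    obtain ⟨m, hm, hmk⟩ := hNmk _ hk
    have hgn : g * n = m * g := by
      refine hext _ _ ?_ ?_
      · have h1 := g.2.2 _ hk
        simp only [conjAct] at h1
        rw [show g.1.right⁻¹ * (g.1.right * n.1.right * g.1.right⁻¹) * g.1.right = n.1.right by
          group] at h1
        rw [hleft, hleft, hn.2, hm.2, hmk, sub_eq_iff_eq_add.1 h1]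
        abel
      · rw [hright, hright, hmk, inv_mul_cancel_right]
    rw [hgn, mul_inv_cancel_right]
    exact hm
  -- the fixed points of `K`
  let B : Subgroup X := R.ker
  have hBright : ∀ b ∈ B, b.1.right = 1 := fun b hb => hb
  have hBfix : ∀ b ∈ B, ∀ k ∈ K, k • b.1.left.toAdd = b.1.left.toAdd := by
    intro b hb k hk
    have := b.2.2 k hk
    rw [hBright b hb, conjAct_one, sub_self] at this
    exact sub_eq_zero.1 this.symm
  have hBN : ∀ b ∈ B, b ∈ N → b = 1 := by
    intro b hb hbN
    refine hext _ _ ?_ (hBright b hb)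
    rw [hbN.2, hBright b hb, hd.map_one]
    rfl
  have hBpow : ∀ b ∈ B, ∀ m : ℕ, (b ^ m).1.left.toAdd = m • b.1.left.toAdd := by
    intro b hb m
    induction m with
    | zero => rw [pow_zero, zero_smul]; rfl
    | succ m ih => rw [pow_succ', hleft, hBright b hb, one_smul, ih, succ_nsmul']
  have hdecomp : ∀ q : X, q.1.right ∈ K → ∃ b ∈ B, b⁻¹ * q ∈ N := by
    intro q hq
    obtain ⟨n, hn, hnq⟩ := hNmk _ hq
    refine ⟨q * n⁻¹, ?_, by simpa using hn⟩
    rw [MonoidHom.mem_ker, map_mul, map_inv, hR, hR, hnq, mul_inv_cancel]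
  obtain ⟨⟨T, hT⟩, hex, huniq⟩ := central_extension_split_quotient (N := N) (B := B) (r := r)
    (by
      intro b hb w
      refine hext _ _ ?_ ?_
      · rw [hleft, hleft, hBright b hb, one_smul,
          smul_eq_of_divisible htor hfin hdiv.2.1 (hBfix b hb) _ w.2.1, add_comm]
      · rw [hright, hright, hBright b hb, one_mul, mul_one])
    (fun x y => hdecomp _ (hdiv.1 _ x.2.1 _ y.2.1))
    (by
      intro w
      obtain ⟨j, hj⟩ := hdiv.2.2.1 _ w.2.1
      refine ⟨j, hdecomp _ ?_⟩
      rw [← hR, map_pow, hR]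
      exact hj)
    (by
      intro b hb hbN
      have h1 := congrArg (fun p : X => p.1.left.toAdd) (hBN _ (B.pow_mem hb r) hbN)
      simp only [hBpow b hb r] at h1
      have h2 : b = 1 := hext _ _ (hr _ h1) (hBright b hb)
      exact h2 ▸ N.one_mem)
    (by
      intro b hb
      obtain ⟨w, hw⟩ := exists_nsmul_eq hr htor hfin b.1.left.toAdd
      have hwfix : ∀ k ∈ K, k • w = w := fun k hk => by
        refine sub_eq_zero.1 (hr _ ?_)
        rw [smul_sub, smul_comm, hw, hBfix b hb k hk, sub_self]
      let c : X := ⟨⟨Multiplicative.ofAdd w, 1⟩, H.one_mem, fun x hx => by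
        rw [conjAct_one, sub_self, toAdd_ofAdd, hwfix x hx, sub_self]⟩
      have hc : c ∈ B := rfl
      refine ⟨c, hc, hext _ _ ?_ ?_⟩
      · rw [hBpow c hc, ← hw]
        rfl
      · rw [hBright b hb, hBright _ (B.pow_mem hc r)])
  have hNT : ∀ p ∈ N, p ∈ T := fun p hp => (hT p).2 ⟨0, by simpa using hp⟩
  have hexT : ∀ g ∈ H, ∃ p ∈ T, p.1.right = g := by
    intro g hg
    obtain ⟨v, hv⟩ := hinner g hg
    obtain ⟨b, hb, hj⟩ := hex ⟨⟨Multiplicative.ofAdd v, g⟩, hg, hv⟩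
    refine ⟨_, (hT _).2 hj, ?_⟩
    rw [hright, hBright b hb, one_mul]
  have huT : ∀ p ∈ T, ∀ q ∈ T, p.1.right = q.1.right → p = q := by
    intro p hp q hq hpq
    have hB : p * q⁻¹ ∈ B := by
      rw [MonoidHom.mem_ker, map_mul, map_inv, hR, hR, hpq, mul_inv_cancel]
    obtain ⟨j, hj⟩ := (hT _).1 (T.mul_mem hp (T.inv_mem hq))
    exact mul_inv_eq_one.1 (hBN _ hB (huniq _ hB j hj))
  choose! σ hσ hσr using hexT
  refine ⟨fun g => (σ g).1.left.toAdd, fun x hx y hy => ?_, fun x hx => ?_⟩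
  · have h1 := huT _ (hσ _ (H.mul_mem hx hy)) _ (T.mul_mem (hσ x hx) (hσ y hy))
      (by rw [hright, hσr _ (H.mul_mem hx hy), hσr x hx, hσr y hy])
    simp only [h1]
    rw [hleft, hσr x hx]
  · obtain ⟨n, hn, hnx⟩ := hNmk x hx
    have h1 := huT _ (hσ _ (hKH hx)) _ (hNT n hn) (by rw [hσr _ (hKH hx), hnx])
    simp only [h1]
    rw [hn.2, hnx]

end Extend

/-! ### Extending derivations along a series -/

section Main

variable {E V : Type*} [Group E] [AddCommGroup V] [DistribMulAction E V]

/-- Extension over a divisible `r`-primary factor: the derivation on `K` differs from its conjugates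
by inner derivations, and as `r` acts injectively on `V` the extension problem splits. -/
theorem MultipleExtends.divisible {r : ℕ} (hr : ∀ v : V, r • v = 0 → v = 0)
    (htor : ∀ v : V, ∃ n : ℕ, 0 < n ∧ n • v = 0)
    (hfin : ∀ n : ℕ, 0 < n → {v : V | n • v = 0}.Finite) {E₀ K H : Subgroup E} {δ₀ : E → V}
    (hE₀ : ∀ g : E, ∀ x ∈ E₀, g * x * g⁻¹ ∈ E₀)
    (hequi : ∀ g : E, ∀ x ∈ E₀, δ₀ (g * x * g⁻¹) = g • δ₀ x) (hE₀K : E₀ ≤ K)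
    (hKH : K ≤ H) (hnorm : ∀ x ∈ H, ∀ y ∈ K, x * y * x⁻¹ ∈ K)
    (hdiv : IsDivisibleFactor r K H) (h2 : FinitelyDetermined V E₀ K)
    (h3 : MultipleExtends E₀ K δ₀) : MultipleExtends E₀ H δ₀ := by
  obtain ⟨n, hn, d, hd, hd0⟩ := h3
  have hinv : ∀ g : E, ∀ x ∈ E₀, conjAct g d x = d x := by
    intro g x hx
    have h1 : g⁻¹ * x * g ∈ E₀ := by simpa using hE₀ g⁻¹ x hx
    have h2 := hequi g _ h1
    rw [show g * (g⁻¹ * x * g) * g⁻¹ = x by group] at h2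
    simp only [conjAct]
    rw [hd0 _ h1, hd0 _ hx, h2, smul_comm g n]
  obtain ⟨δ, hδ, hδd⟩ := exists_extension_of_divisible hr htor hfin hKH hnorm hdiv hd
    (fun g hg => isInnerOn_conjAct_sub hr htor hfin hE₀ hKH hnorm hdiv h2 hd hinv hg)
  exact ⟨n, hn, δ, hδ, fun x hx => by rw [hδd x (hE₀K hx), hd0 x hx]⟩

/-- An equivariant homomorphism from a normal subgroup `E₀` to a torsion module with finite layers
and no `r`-torsion extends, up to a positive multiple, to a derivation on `H`, provided that `E₀`
acts trivially and is joined to `H` by cyclic factors and divisible `r`-primary factors. -/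
theorem multipleExtends_of_chain {r : ℕ} (hr : ∀ v : V, r • v = 0 → v = 0)
    (htor : ∀ v : V, ∃ n : ℕ, 0 < n ∧ n • v = 0)
    (hfin : ∀ n : ℕ, 0 < n → {v : V | n • v = 0}.Finite) {E₀ H : Subgroup E} {δ₀ : E → V}
    (hE₀ : ∀ g : E, ∀ x ∈ E₀, g * x * g⁻¹ ∈ E₀)
    (hequi : ∀ g : E, ∀ x ∈ E₀, δ₀ (g * x * g⁻¹) = g • δ₀ x) (hδ₀ : IsDer E₀ δ₀)
    (hchain : Relation.ReflTransGen (IsGoodFactor r) E₀ H) : MultipleExtends E₀ H δ₀ := by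
  suffices h : E₀ ≤ H ∧ FinitelyDetermined V E₀ H ∧ MultipleExtends E₀ H δ₀ from h.2.2
  induction hchain with
  | refl =>
    exact ⟨le_rfl, ⟨∅, by simp, fun d _ h0 _ => h0⟩, 1, one_pos, δ₀, hδ₀, by simp⟩
  | tail _ hKH ih =>
    obtain ⟨hle, h2, h3⟩ := ih
    obtain ⟨hKH, hnorm, ⟨g, hg, hcyc⟩ | hdiv⟩ := hKH
    · exact ⟨hle.trans hKH, h2.cyclic hKH hg hcyc,
        h3.cyclic htor hE₀ hequi hle hKH hnorm hg hcyc h2⟩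
    · exact ⟨hle.trans hKH, h2.divisible hr htor hfin hKH hnorm hdiv,
        h3.divisible hr htor hfin hE₀ hequi hle hKH hnorm hdiv h2⟩

/-- When `E` is finitely generated, a torsion module as above that is an equivariant image of `E₀`
has finite exponent, and so is finite. -/
theorem finite_of_chain {r : ℕ} (hfg : Group.FG E) (hr : ∀ v : V, r • v = 0 → v = 0)
    (htor : ∀ v : V, ∃ n : ℕ, 0 < n ∧ n • v = 0)
    (hfin : ∀ n : ℕ, 0 < n → {v : V | n • v = 0}.Finite) {E₀ : Subgroup E} {δ₀ : E → V}
    (hE₀ : ∀ g : E, ∀ x ∈ E₀, g * x * g⁻¹ ∈ E₀)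
    (hequi : ∀ g : E, ∀ x ∈ E₀, δ₀ (g * x * g⁻¹) = g • δ₀ x) (hδ₀ : IsDer E₀ δ₀)
    (hsurj : ∀ v : V, ∃ x ∈ E₀, δ₀ x = v)
    (hchain : Relation.ReflTransGen (IsGoodFactor r) E₀ ⊤) : Finite V := by
  obtain ⟨n, hn, d, hd, hd0⟩ := multipleExtends_of_chain hr htor hfin hE₀ hequi hδ₀ hchain
  obtain ⟨S, hS⟩ := Group.fg_def.1 hfg
  obtain ⟨M, hM, hMS⟩ := exists_nsmul_eq_zero_on_finset htor S d
  have hzero : ∀ x : E, M • d x = 0 := by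
    have h1 : Subgroup.closure (S : Set E) ≤ (hd.nsmul M).zeros :=
      (Subgroup.closure_le _).2 fun x hx => ⟨Subgroup.mem_top x, hMS x hx⟩
    intro x
    exact (h1 (hS ▸ Subgroup.mem_top x)).2
  have h1 := hfin (M * n) (Nat.mul_pos hM hn)
  have h2 : {v : V | (M * n) • v = 0} = Set.univ := by
    refine Set.eq_univ_of_forall fun v => ?_
    obtain ⟨x, hx, rfl⟩ := hsurj v
    change (M * n) • δ₀ x = 0
    rw [mul_smul, ← hd0 x hx, hzero]
  rw [h2] at h1
  exact Set.finite_univ_iff.1 h1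

end Main

/-! ### Series in abelian groups -/

/-- Good factors of a quotient of `H` pull back to good factors in the ambient group. -/
theorem IsGoodFactor.lift {G Q : Type*} [Group G] [Group Q] {H : Subgroup G} (f : H →* Q)
    (hf : Function.Surjective f) {r : ℕ} {U W : Subgroup Q} (h : IsGoodFactor r U W) :
    IsGoodFactor r (liftSubgroup f U) (liftSubgroup f W) := by
  classical
  have hmem : ∀ (M : Subgroup Q) (x : H), (x : G) ∈ liftSubgroup f M ↔ f x ∈ M := fun M x => by
    rw [mem_liftSubgroup]
    exact ⟨fun ⟨_, h⟩ => h, fun h => ⟨x.2, h⟩⟩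
  have hmk : ∀ (M : Subgroup Q) (x : G), x ∈ liftSubgroup f M → ∃ y : H, (y : G) = x ∧ f y ∈ M :=
    fun M x hx => ⟨⟨x, (mem_liftSubgroup.1 hx).1⟩, rfl, (mem_liftSubgroup.1 hx).2⟩
  refine ⟨liftSubgroup_mono f h.1, fun x hx y hy => ?_, ?_⟩
  · obtain ⟨x, rfl, hx'⟩ := hmk _ _ hx
    obtain ⟨y, rfl, hy'⟩ := hmk _ _ hy
    refine (hmem U (x * y * x⁻¹)).2 ?_
    simpa using h.2.1 _ hx' _ hy'
  rcases h.2.2 with ⟨g, hg, hcyc⟩ | ⟨h1, h2, h3, h4⟩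
  · left
    obtain ⟨g, rfl⟩ := hf g
    refine ⟨g, (hmem _ _).2 hg, fun x hx => ?_⟩
    obtain ⟨x, rfl, hx'⟩ := hmk _ _ hx
    obtain ⟨k, hk⟩ := hcyc _ hx'
    refine ⟨k, (hmem U (x * g ^ k)).2 ?_⟩
    simpa using hk
  · refine Or.inr ⟨fun x hx y hy => ?_, fun x hx n hn => ?_, fun x hx => ?_, fun n hn => ?_⟩
    · obtain ⟨x, rfl, hx'⟩ := hmk _ _ hx
      obtain ⟨y, rfl, hy'⟩ := hmk _ _ hy
      refine (hmem U (x * y * x⁻¹ * y⁻¹)).2 ?_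
      simpa using h1 _ hx' _ hy'
    · obtain ⟨x, rfl, hx'⟩ := hmk _ _ hx
      obtain ⟨y, hy, hxy⟩ := h2 _ hx' n hn
      obtain ⟨y, rfl⟩ := hf y
      refine ⟨y, (hmem _ _).2 hy, (hmem U (x⁻¹ * y ^ n)).2 ?_⟩
      simpa using hxy
    · obtain ⟨x, rfl, hx'⟩ := hmk _ _ hx
      obtain ⟨j, hj⟩ := h3 _ hx'
      refine ⟨j, (hmem U (x ^ r ^ j)).2 ?_⟩
      simpa using hj
    · obtain ⟨F, hF⟩ := h4 n hn
      choose s hs using hf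
      refine ⟨F.image fun q => (s q : G), fun x hx hxn => ?_⟩
      obtain ⟨x, rfl, hx'⟩ := hmk _ _ hx
      have hxn' := (hmem U (x ^ n)).1 hxn
      rw [map_pow] at hxn'
      obtain ⟨b, hb, hbx⟩ := hF _ hx' hxn'
      refine ⟨_, Finset.mem_image_of_mem _ hb, (hmem U ((s b)⁻¹ * x)).2 ?_⟩
      rwa [map_mul, map_inv, hs]

theorem Relation.ReflTransGen.lift_isGoodFactor {G Q : Type*} [Group G] [Group Q]
    {H : Subgroup G} (f : H →* Q) (hf : Function.Surjective f) {r : ℕ} {U W : Subgroup Q}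
    (h : Relation.ReflTransGen (IsGoodFactor r) U W) :
    Relation.ReflTransGen (IsGoodFactor r) (liftSubgroup f U) (liftSubgroup f W) := by
  induction h with
  | refl => exact .refl
  | tail _ hab ih => exact ih.tail (hab.lift f hf)

theorem chain_sup_closure {Y : Type*} [CommGroup Y] (r : ℕ) (U : Subgroup Y) (S : Finset Y) :
    Relation.ReflTransGen (IsGoodFactor r) U (U ⊔ Subgroup.closure (S : Set Y)) := by
  classical
  induction S using Finset.induction_on with
  | empty => simpa using Relation.ReflTransGen.refl
  | insert y S _ ih =>
    refine ih.tail ?_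
    rw [Finset.coe_insert, Set.insert_eq, Subgroup.closure_union, sup_left_comm]
    refine ⟨le_sup_right, fun x _ z hz => by rwa [mul_comm x, mul_inv_cancel_right],
      Or.inl ⟨y, Subgroup.mem_sup_left (Subgroup.mem_closure_singleton_self y), fun x hx => ?_⟩⟩
    obtain ⟨a, ha, b, hb, rfl⟩ := Subgroup.mem_sup.1 hx
    obtain ⟨k, rfl⟩ := Subgroup.mem_closure_singleton.1 ha
    refine ⟨-k, ?_⟩
    rwa [mul_comm, zpow_neg, inv_mul_cancel_left]

theorem chain_of_finite_quotient {Y : Type*} [CommGroup Y] (r : ℕ) (U : Subgroup Y)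
    [Finite (Y ⧸ U)] : Relation.ReflTransGen (IsGoodFactor r) U ⊤ := by
  classical
  obtain ⟨S, hS⟩ : ∃ S : Finset Y, U ⊔ Subgroup.closure (S : Set Y) = ⊤ := by
    have hfin := Set.finite_range (Quotient.out : Y ⧸ U → Y)
    refine ⟨hfin.toFinset, eq_top_iff.2 fun y _ => ?_⟩
    have h1 : (y : Y ⧸ U).out⁻¹ * y ∈ U := QuotientGroup.eq.1 (QuotientGroup.out_eq' _)
    have h2 : (y : Y ⧸ U).out ∈ Subgroup.closure (hfin.toFinset : Set Y) :=
      Subgroup.subset_closure (by simp)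
    simpa using Subgroup.mul_mem _ (Subgroup.mem_sup_right h2) (Subgroup.mem_sup_left h1)
  exact hS ▸ chain_sup_closure r U S

/-- A thin `r`-primary group is an extension of a divisible group, the smallest of its subgroups of
`n`-th powers, by a finite group. -/
theorem chain_of_primary {T : Type*} [CommGroup T] {r : ℕ} (hr : 0 < r) (hT : IsThinTorsion T)
    (hprim : ∀ t : T, ∃ j : ℕ, t ^ r ^ j = 1) :
    Relation.ReflTransGen (IsGoodFactor r) ⊥ (⊤ : Subgroup T) := by
  have hw : WellFoundedLT (Subgroup T) := wellFoundedLT_of_primary hprim (hT.2 r hr)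
  obtain ⟨U, ⟨n, hn, rfl⟩, hmin⟩ := hw.wf.has_min
    {U : Subgroup T | ∃ n : ℕ, 0 < n ∧ (powMonoidHom n : T →* T).range = U} ⟨_, 1, one_pos, rfl⟩
  have hdiv : ∀ x : T, ∀ m : ℕ, 0 < m → ∃ y : T, (y ^ n) ^ m = x ^ n := by
    intro x m hm
    have hle : (powMonoidHom (n * m) : T →* T).range ≤ (powMonoidHom n : T →* T).range := by
      rintro _ ⟨y, rfl⟩
      exact ⟨y ^ m, by simp only [powMonoidHom_apply]; rw [← pow_mul, mul_comm]⟩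
    have h1 : (powMonoidHom n : T →* T).range ≤ (powMonoidHom (n * m) : T →* T).range := by
      by_contra h
      exact hmin _ ⟨n * m, Nat.mul_pos hn hm, rfl⟩ (lt_of_le_not_ge hle h)
    obtain ⟨y, hy⟩ := h1 ⟨x, rfl⟩
    exact ⟨y, by rw [← pow_mul]; exact hy⟩
  have hgood : IsGoodFactor r ⊥ (powMonoidHom n : T →* T).range := by
    refine ⟨bot_le, fun x _ y hy => by rwa [mul_comm x, mul_inv_cancel_right], Or.inr
      ⟨fun x _ y _ => ?_, ?_, fun x _ => ?_, fun m hm => ?_⟩⟩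
    · rw [mul_comm x, mul_inv_cancel_right, mul_inv_cancel]
      exact Subgroup.one_mem _
    · rintro _ ⟨x, rfl⟩ m hm
      obtain ⟨y, hy⟩ := hdiv x m hm
      refine ⟨y ^ n, ⟨y, rfl⟩, ?_⟩
      rw [hy, powMonoidHom_apply, inv_mul_cancel]
      exact Subgroup.one_mem _
    · obtain ⟨j, hj⟩ := hprim x
      exact ⟨j, by rw [hj]; exact Subgroup.one_mem _⟩
    · refine ⟨(hT.2 m hm).toFinset, fun x _ hx => ⟨x, ?_, ?_⟩⟩
      · simpa using hx
      · rw [inv_mul_cancel]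
        exact Subgroup.one_mem _
  have hQ := hT.of_surjective (QuotientGroup.mk' (powMonoidHom n : T →* T).range)
    (QuotientGroup.mk'_surjective _)
  have hfin : Finite (T ⧸ (powMonoidHom n : T →* T).range) := by
    refine Set.finite_univ_iff.1 ((hQ.2 n hn).subset fun x _ => ?_)
    obtain ⟨x, rfl⟩ := QuotientGroup.mk_surjective x
    change (x : T ⧸ (powMonoidHom n : T →* T).range) ^ n = 1
    rw [← QuotientGroup.mk_pow, QuotientGroup.eq_one_iff]
    exact ⟨x, rfl⟩
  exact (Relation.ReflTransGen.single hgood).trans (chain_of_finite_quotient r _)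

/-- The elements having an `r ^ k`-th power in `L` for some `k`. -/
def primaryClosure {Y : Type*} [CommGroup Y] (r : ℕ) (L : Subgroup Y) : Subgroup Y where
  carrier := {y | ∃ k : ℕ, y ^ r ^ k ∈ L}
  one_mem' := ⟨0, by simp⟩
  mul_mem' := by
    rintro x y ⟨i, hi⟩ ⟨j, hj⟩
    refine ⟨i + j, ?_⟩
    rw [mul_pow]
    refine L.mul_mem ?_ ?_
    · rw [pow_add, pow_mul]
      exact L.pow_mem hi _
    · rw [add_comm, pow_add, pow_mul]
      exact L.pow_mem hj _
  inv_mem' := by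
    rintro x ⟨i, hi⟩
    exact ⟨i, by rw [inv_pow]; exact L.inv_mem hi⟩

theorem mem_primaryClosure {Y : Type*} [CommGroup Y] {r : ℕ} {L : Subgroup Y} {y : Y} :
    y ∈ primaryClosure r L ↔ ∃ k : ℕ, y ^ r ^ k ∈ L := Iff.rfl

theorem le_primaryClosure {Y : Type*} [CommGroup Y] (r : ℕ) (L : Subgroup Y) :
    L ≤ primaryClosure r L := fun y hy => ⟨0, by simpa using hy⟩

/-- The chain goes through `L`, reached by cyclic factors, and the `r`-primary closure of `L`, whose
quotient by `L` is a thin `r`-primary group; the last quotient is finite. -/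
theorem chain_of_primaryClosure {Y : Type*} [CommGroup Y] {r : ℕ} (hr : 0 < r) {L : Subgroup Y}
    (hL : L.FG) (hT : IsThinTorsion (Y ⧸ L)) [Finite (Y ⧸ primaryClosure r L)] :
    Relation.ReflTransGen (IsGoodFactor r) ⊥ (⊤ : Subgroup Y) := by
  obtain ⟨S, rfl⟩ := hL
  set L := Subgroup.closure (S : Set Y)
  have h1 : Relation.ReflTransGen (IsGoodFactor r) ⊥ L := by
    simpa using chain_sup_closure r (⊥ : Subgroup Y) S
  let P := primaryClosure r L
  let f : P →* P ⧸ L.subgroupOf P := QuotientGroup.mk' _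
  have hker : ∀ x : P, f x = 1 ↔ (x : Y) ∈ L := fun x =>
    (QuotientGroup.eq_one_iff x).trans Subgroup.mem_subgroupOf
  have hthin : IsThinTorsion (P ⧸ L.subgroupOf P) := by
    refine hT.of_injective (QuotientGroup.map (L.subgroupOf P) L P.subtype le_rfl) ?_
    rw [injective_iff_map_eq_one]
    intro x hx
    obtain ⟨x, rfl⟩ := QuotientGroup.mk_surjective x
    exact (hker x).2 ((QuotientGroup.eq_one_iff _).1 hx)
  have h2 := (chain_of_primary hr hthin (fun t => by
    obtain ⟨x, rfl⟩ := QuotientGroup.mk'_surjective _ t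
    obtain ⟨k, hk⟩ := x.2
    exact ⟨k, by rw [← map_pow]; exact (hker _).2 hk⟩)).lift_isGoodFactor f
      (QuotientGroup.mk'_surjective _)
  rw [liftSubgroup_bot f (le_primaryClosure r L) hker, liftSubgroup_top] at h2
  exact (h1.trans h2).trans (chain_of_finite_quotient r P)

/-! ### Finitely generated soluble groups of finite abelian ranks -/

/-- The conjugation action of `G` on a quotient of a normal subgroup `A` by a subgroup that is
also normal in `G`. -/
theorem exists_conjugation_action {G V : Type*} [Group G] [CommGroup V] {A : Subgroup G}
    (hA : ∀ g : G, ∀ x ∈ A, g * x * g⁻¹ ∈ A) (q : A →* V) (hq : Function.Surjective q)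
    (hker : ∀ (g : G) (a : A), q a = 1 → q ⟨g * a * g⁻¹, hA g a a.2⟩ = 1) :
    ∃ _ : MulDistribMulAction G V, ∀ (g : G) (a : A), g • q a = q ⟨g * a * g⁻¹, hA g a a.2⟩ := by
  choose s hs using hq
  let F : G → V → V := fun g v => q ⟨g * s v * g⁻¹, hA g _ (s v).2⟩
  have hF : ∀ (g : G) (a : A), F g (q a) = q ⟨g * a * g⁻¹, hA g a a.2⟩ := by
    intro g a
    have h1 := hker g ((s (q a))⁻¹ * a) (by rw [map_mul, map_inv, hs, inv_mul_cancel])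
    have h2 : (⟨g * a * g⁻¹, hA g a a.2⟩ : A) = ⟨g * s (q a) * g⁻¹, hA g _ (s (q a)).2⟩ *
        ⟨g * ((s (q a))⁻¹ * a : A) * g⁻¹, hA g _ ((s (q a))⁻¹ * a).2⟩ := by
      apply Subtype.ext
      push_cast
      group
    rw [h2, map_mul, h1, mul_one]
  refine ⟨
    { smul := F
      mul_smul := fun g h v => ?_
      one_smul := fun v => ?_
      smul_one := fun g => ?_
      smul_mul := fun g v w => ?_ }, hF⟩
  · obtain ⟨a, rfl⟩ : ∃ a, q a = v := ⟨_, hs v⟩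
    refine (hF (g * h) a).trans (Eq.trans (congrArg q (Subtype.ext ?_))
      ((hF g _).symm.trans (congrArg (F g) (hF h a).symm)))
    simp only
    group
  · obtain ⟨a, rfl⟩ : ∃ a, q a = v := ⟨_, hs v⟩
    refine (hF 1 a).trans (congrArg q (Subtype.ext ?_))
    simp
  · change F g 1 = 1
    rw [← map_one q, hF]
    refine congrArg q (Subtype.ext ?_)
    simp
  · obtain ⟨a, rfl⟩ : ∃ a, q a = v := ⟨_, hs v⟩
    obtain ⟨b, rfl⟩ : ∃ b, q b = w := ⟨_, hs w⟩
    change F g (q a * q b) = F g (q a) * F g (q b)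
    rw [← map_mul, hF, hF, hF, ← map_mul]
    refine congrArg q (Subtype.ext ?_)
    push_cast
    group

/-- When `Y / L` is torsion, each operator on `Y` maps a power of every element of the finitely
generated subgroup `L` into `L`, and the exponent can be chosen uniformly; the primary closure of
`L` for such an exponent is invariant. -/
theorem exists_invariant_primaryClosure {G Y : Type*} [Group G] [CommGroup Y]
    [MulDistribMulAction G Y] (hfg : Group.FG G) {L : Subgroup Y} (hL : L.FG)
    (hT : ∀ y : Y, ∃ n : ℕ, 0 < n ∧ y ^ n ∈ L) {r : ℕ} (hr : 0 < r) :
    ∃ k : ℕ, 0 < r * k ∧ ∀ g : G, ∀ y ∈ primaryClosure (r * k) L,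
      g • y ∈ primaryClosure (r * k) L := by
  classical
  obtain ⟨B, rfl⟩ := hL
  set L := Subgroup.closure (B : Set Y)
  have hstep : ∀ g : G, ∃ n : ℕ, 0 < n ∧ ∀ l ∈ L, (g • l) ^ n ∈ L := by
    intro g
    choose e he he' using hT
    refine ⟨∏ b ∈ B, e (g • b), Finset.prod_pos fun b _ => he _, fun l hl => ?_⟩
    have h1 : L ≤ L.comap ((powMonoidHom (∏ b ∈ B, e (g • b)) : Y →* Y).comp
        (MulDistribMulAction.toMonoidHom Y g)) := by
      refine (Subgroup.closure_le _).2 fun b hb => ?_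
      obtain ⟨c, hc⟩ := Finset.dvd_prod_of_mem (fun b => e (g • b)) hb
      change (g • b) ^ (∏ b ∈ B, e (g • b)) ∈ L
      rw [hc, pow_mul]
      exact L.pow_mem (he' _) c
    exact h1 hl
  choose n hn hn' using hstep
  obtain ⟨S, hS⟩ := (Monoid.fg_def.1 ((Group.fg_iff_monoid_fg).1 hfg))
  refine ⟨∏ g ∈ S, n g, Nat.mul_pos hr (Finset.prod_pos fun g _ => hn g), ?_⟩
  set N := r * ∏ g ∈ S, n g
  let M : Submonoid G :=
    { carrier := {g | ∀ y ∈ primaryClosure N L, g • y ∈ primaryClosure N L}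
      one_mem' := fun y hy => by rwa [one_smul]
      mul_mem' := fun {g h} hg hh y hy => by
        rw [mul_smul]
        exact hg _ (hh _ hy) }
  have hM : Submonoid.closure (S : Set G) ≤ M := by
    refine (Submonoid.closure_le).2 fun g hg => ?_
    rintro y ⟨k, hk⟩
    obtain ⟨c, hc⟩ := (Finset.dvd_prod_of_mem n hg).mul_left r
    refine ⟨k + 1, ?_⟩
    rw [pow_succ, pow_mul, ← smul_pow']
    change _ ^ (r * ∏ g ∈ S, n g) ∈ L
    rw [hc, pow_mul]
    exact L.pow_mem (hn' g _ hk) c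
  intro g
  exact hM (hS ▸ Submonoid.mem_top g)

/-- The key step: a good series reaching down to `A` can be continued to `K`. -/
theorem exists_chain_step {G : Type u} [Group G] (hfg : Group.FG G) {K A : Subgroup G}
    (hK : ∀ g : G, ∀ x ∈ K, g * x * g⁻¹ ∈ K) (hA : ∀ g : G, ∀ x ∈ A, g * x * g⁻¹ ∈ A)
    (hKA : K ≤ A) (hcomm : ∀ x ∈ A, ∀ y ∈ A, x * y * x⁻¹ * y⁻¹ ∈ K)
    (hthin : ∀ (Y : Type u) [CommGroup Y] (f : A →* Y), Function.Surjective f → HasThinRank Y)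
    {r : ℕ} (hr : 0 < r) (hchain : Relation.ReflTransGen (IsGoodFactor r) A ⊤) :
    ∃ r' : ℕ, 0 < r' ∧ Relation.ReflTransGen (IsGoodFactor r') K ⊤ := by
  classical
  obtain ⟨Y, _, f, hf, hker⟩ := exists_abelian_surjection (fun x _ y hy => hK x y hy) hcomm
  obtain ⟨L, hL, hT⟩ := hthin Y f hf
  obtain ⟨_, hact⟩ := exists_conjugation_action hA f hf
    (fun g a ha => (hker _).2 (hK g _ ((hker a).1 ha)))
  obtain ⟨k, hk, hinv⟩ := exists_invariant_primaryClosure hfg hL (fun y => by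
    obtain ⟨n, hn, h⟩ := hT.1 y
    rw [← QuotientGroup.mk_pow, QuotientGroup.eq_one_iff] at h
    exact ⟨n, hn, h⟩) hr
  set P := primaryClosure (r * k) L with hP
  let q : A →* Y ⧸ P := (QuotientGroup.mk' P).comp f
  have hq : Function.Surjective q := (QuotientGroup.mk'_surjective P).comp hf
  have hq1 : ∀ a, q a = 1 ↔ f a ∈ P := fun a => QuotientGroup.eq_one_iff _
  obtain ⟨_, hact'⟩ := exists_conjugation_action hA q hq (fun g a ha => by
    rw [hq1] at ha ⊢
    rw [← hact]
    exact hinv g _ ha)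
  let _ : DistribMulAction G (Additive (Y ⧸ P)) :=
    { smul := fun g v => Additive.ofMul (g • v.toMul)
      one_smul := fun v => one_smul G v.toMul
      mul_smul := fun g h v => mul_smul g h v.toMul
      smul_zero := fun g => (smul_one g : g • (1 : Y ⧸ P) = 1)
      smul_add := fun g v w => smul_mul' g v.toMul w.toMul }
  have hthinP : IsThinTorsion (Y ⧸ P) := hT.of_surjective
    (QuotientGroup.map L P (MonoidHom.id Y) (le_primaryClosure _ _)) (fun y => by
      obtain ⟨y, rfl⟩ := QuotientGroup.mk_surjective y
      exact ⟨(y : Y ⧸ L), rfl⟩)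
  let δ₀ : G → Additive (Y ⧸ P) := fun x =>
    if h : x ∈ A then Additive.ofMul (q ⟨x, h⟩) else 0
  have hδ₀ : ∀ (x : G) (h : x ∈ A), δ₀ x = Additive.ofMul (q ⟨x, h⟩) := fun x h => dif_pos h
  have hsmul : ∀ (g x : G) (h : x ∈ A),
      g • δ₀ x = Additive.ofMul (q ⟨g * x * g⁻¹, hA g x h⟩) := by
    intro g x h
    rw [hδ₀ x h]
    exact congrArg Additive.ofMul (hact' g ⟨x, h⟩)
  have hfinite : Finite (Additive (Y ⧸ P)) := by
    refine finite_of_chain (r := r) (E₀ := A) (δ₀ := δ₀) hfg ?_ hthinP.1 hthinP.2 hA ?_ ?_ ?_ hchain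
    · intro v hv
      obtain ⟨y, hy⟩ := QuotientGroup.mk_surjective v.toMul
      have h1 : (y : Y ⧸ P) ^ r = 1 := by rw [hy]; exact hv
      rw [← QuotientGroup.mk_pow, QuotientGroup.eq_one_iff] at h1
      obtain ⟨j, hj⟩ := h1
      have h2 : y ∈ P := by
        refine ⟨j + 1, ?_⟩
        rw [← pow_mul] at hj
        rw [show (r * k) ^ (j + 1) = r * (r * k) ^ j * k by ring, pow_mul]
        exact L.pow_mem hj k
      have h3 : v.toMul = 1 := by rw [← hy]; exact (QuotientGroup.eq_one_iff y).2 h2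
      exact h3
    · intro g x hx
      rw [hsmul g x hx, hδ₀ _ (hA g x hx)]
    · intro x hx y hy
      -- `A` acts trivially, since its image is commutative
      have h1 : q ⟨x * y * x⁻¹, hA x y hy⟩ = q ⟨y, hy⟩ := by
        rw [show (⟨x * y * x⁻¹, hA x y hy⟩ : A) = ⟨x, hx⟩ * ⟨y, hy⟩ * ⟨x, hx⟩⁻¹ from rfl, map_mul,
          map_mul, map_inv, mul_comm (q ⟨x, hx⟩), mul_inv_cancel_right]
      rw [hsmul x y hy, h1, hδ₀ _ hx, hδ₀ _ (A.mul_mem hx hy), ← ofMul_mul, ← map_mul]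
      rfl
    · intro v
      obtain ⟨a, ha⟩ := hq v.toMul
      exact ⟨a, a.2, (hδ₀ a a.2).trans (congrArg Additive.ofMul ha)⟩
  have hfinite' : Finite (Y ⧸ P) := hfinite
  have h1 := (chain_of_primaryClosure hk hL hT).lift_isGoodFactor f hf
  rw [liftSubgroup_bot f hKA hker, liftSubgroup_top] at h1
  exact ⟨r * k, hk, h1.trans (hchain.isGoodFactor_mul k)⟩

theorem IsFARGroup.isMinimax {G : Type u} [Group G] [Group.IsSolvable G] (hfg : Group.FG G)
    (h : IsFARGroup G) : IsMinimax G := by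
  rw [isFARGroup_iff_chain] at h
  have hnormal : ∀ (i : ℕ) (g : G), ∀ x ∈ derivedSeries G i, g * x * g⁻¹ ∈ derivedSeries G i :=
    fun i g x hx => (derivedSeries_normal G i).conj_mem x hx g
  have key : ∀ i : ℕ, ∃ r : ℕ, 0 < r ∧
      Relation.ReflTransGen (IsGoodFactor r) (derivedSeries G i) ⊤ := by
    intro i
    induction i with
    | zero => exact ⟨1, one_pos, .refl⟩
    | succ i ih =>
      obtain ⟨r, hr, hchain⟩ := ih
      refine exists_chain_step hfg (hnormal (i + 1)) (hnormal i)
        (derivedSeries_antitone _ (Nat.le_succ i)) (fun x hx y hy => ?_)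
        (fun Y _ f hf => hasThinRank_of_chain h _ le_top Y f hf) hr hchain
      rw [derivedSeries_succ]
      exact Subgroup.commutator_mem_commutator hx hy
  obtain ⟨d, hd⟩ := Group.IsSolvable.solvable (G := G)
  obtain ⟨r, hr, hchain⟩ := key d
  rw [hd] at hchain
  rw [isMinimax_iff_chain]
  generalize (⊤ : Subgroup G) = H at hchain
  induction hchain with
  | refl => exact .refl
  | tail _ hab ih => exact ih.tail (hab.isMinimaxFactor hr)

/-- A finitely generated solvable group has finite abelian ranks if and only if it is
minimax. -/
theorem isFARGroup_iff_isMinimax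
    {G : Type*} [Group G] (hfg : Group.FG G) (hsolv : IsSolvable G) :
    IsFARGroup G ↔ IsMinimax G := by
  have : Group.IsSolvable G := hsolv
  exact ⟨fun h => h.isMinimax hfg, fun h => h.isFARGroup⟩
end

section
/- Let p₁, p₂, q₁, q₂ be four distinct primes. Then the automorphism group of the direct product BS(1, p₁q₁) × BS(1, p₂q₂) is isomorphic to Aut(BS(1, p₁q₁)) × Aut(BS(1, p₂q₂)); equivalently, every automorphism of BS(1, p₁q₁) × BS(1, p₂q₂) preserves each of the two direct factors. -/
/-! Let `G = BS(1,n)` and `H = BS(1,m)` with `n, m > 1` coprime. An automorphism of `G × H` is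
given by four homomorphisms between the factors, and the point is that the mixed ones are trivial.

Let `β : H → G` be the mixed component. Acting on `ℚ` by `x ↦ (z ↦ z + 1)`, `t ↦ (z ↦ z / n)`
represents `G` faithfully (`BS.toPerm_injective`, from the normal form `tⁱ xᵏ t⁻ʲ`) by affine maps
whose slopes are powers of `n`. If `s⁻¹ y s = yᵐ` in `G`, then `y` acts as a translation, by `c`
say, and comparing translation lengths gives `nʲ c = m c` for some integer `j`; as `m` is not a
power of `n`, `c = 0` and `y = 1` (`BS.eq_one_of_conj_eq_pow`). So `β` kills the generator `x`
of `H`, and its image is generated by `β t`. Now `β t` commutes with this image and with the image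
of the other component `G → G`, and these two images generate `G`; hence `β t` is central,
and `G` has trivial centre (`BS.eq_one_of_comm`). The same applies with the factors exchanged, so
every automorphism is diagonal. -/


/-- Defining relation of the Baumslag–Solitar group `BS(1,n)`:
`t⁻¹ * x * t * x⁻ⁿ`, where `x = of false` and `t = of true`. -/
def bsRels (n : ℤ) : Set (FreeGroup Bool) :=
  {(FreeGroup.of true)⁻¹ * FreeGroup.of false * FreeGroup.of true * (FreeGroup.of false) ^ (-n)}

/-- The Baumslag–Solitar group `BS(1,n) = ⟨x, t ∣ t⁻¹ x t = xⁿ⟩`. -/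
def BS (n : ℤ) : Type := PresentedGroup (bsRels n)

instance (n : ℤ) : Group (BS n) := inferInstanceAs (Group (PresentedGroup (bsRels n)))

namespace BS

/-! ### Presentation and normal form -/

/-- The generator `x` of `BS(1,n)`. -/
def x (n : ℤ) : BS n := PresentedGroup.of (rels := bsRels n) false

/-- The generator `t` of `BS(1,n)`. -/
def t (n : ℤ) : BS n := PresentedGroup.of (rels := bsRels n) true

lemma rel (n : ℤ) : (t n)⁻¹ * x n * t n = x n ^ n := by
  have h : PresentedGroup.mk (bsRels n) ((FreeGroup.of true)⁻¹ * FreeGroup.of false *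
      FreeGroup.of true * (FreeGroup.of false) ^ (-n)) = 1 :=
    PresentedGroup.one_of_mem (by simp [bsRels])
  simp only [map_mul, map_inv, map_zpow, zpow_neg] at h
  exact mul_inv_eq_one.mp h

/-- The universal property of the presentation. -/
def lift {K : Type*} [Group K] (n : ℤ) (a b : K) (h : b⁻¹ * a * b = a ^ n) : BS n →* K :=
  PresentedGroup.toGroup (rels := bsRels n) (f := fun i => bif i then b else a) (by
    intro r hr
    rw [bsRels, Set.mem_singleton_iff] at hr
    subst hr
    simp [h])

@[simp] lemma lift_x {K : Type*} [Group K] (n : ℤ) (a b : K) (h : b⁻¹ * a * b = a ^ n) :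
    lift n a b h (x n) = a :=
  PresentedGroup.toGroup.of _

@[simp] lemma lift_t {K : Type*} [Group K] (n : ℤ) (a b : K) (h : b⁻¹ * a * b = a ^ n) :
    lift n a b h (t n) = b :=
  PresentedGroup.toGroup.of _

lemma hom_ext {K : Type*} [Group K] {n : ℤ} {f g : BS n →* K} (hx : f (x n) = g (x n))
    (ht : f (t n) = g (t n)) : f = g :=
  PresentedGroup.ext (rels := bsRels n) (φ := f) (ψ := g) (by
    rintro (_ | _)
    · exact hx
    · exact ht)

/-- Induction by left multiplication by powers of `x` and by `t`, `t⁻¹`. -/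
lemma induction {n : ℤ} {P : BS n → Prop} (g : BS n) (h1 : P 1)
    (hx : ∀ (e : ℤ) (g), P g → P (x n ^ e * g)) (ht : ∀ g, P g → P (t n * g))
    (ht' : ∀ g, P g → P ((t n)⁻¹ * g)) : P g := by
  have hg : g ∈ Subgroup.closure (Set.range (PresentedGroup.of (rels := bsRels n))) := by
    rw [PresentedGroup.closure_range_of]; exact Subgroup.mem_top _
  induction hg using Subgroup.closure_induction_left with
  | one => exact h1
  | mul_left a ha b _ ih =>
    obtain ⟨_ | _, rfl⟩ := ha
    · have h := hx 1 b ih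
      rwa [zpow_one] at h
    · exact ht b ih
  | inv_mul_cancel a ha b _ ih =>
    obtain ⟨_ | _, rfl⟩ := ha
    · have h := hx (-1) b ih
      rwa [zpow_neg_one] at h
    · exact ht' b ih

lemma inv_t_mul_zpow (n k : ℤ) : (t n)⁻¹ * x n ^ k = x n ^ (n * k) * (t n)⁻¹ := by
  have h : ((t n)⁻¹ * x n * t n) ^ k = x n ^ (n * k) := by rw [rel, zpow_mul]
  have h2 : ((t n)⁻¹ * x n * t n) ^ k = (t n)⁻¹ * x n ^ k * t n := by
    simpa using conj_zpow (a := (t n)⁻¹) (b := x n) (i := k)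
  rw [← h, h2]; group

lemma zpow_mul_t (n k : ℤ) : x n ^ k * t n = t n * x n ^ (n * k) := by
  have h := inv_t_mul_zpow n k
  calc x n ^ k * t n = t n * ((t n)⁻¹ * x n ^ k) * t n := by group
    _ = _ := by rw [h]; group

lemma zpow_mul_t_pow (n k : ℤ) (i : ℕ) :
    x n ^ k * t n ^ i = t n ^ i * x n ^ (n ^ i * k) := by
  induction i with
  | zero => simp
  | succ i ih => rw [pow_succ, ← mul_assoc, ih, mul_assoc, zpow_mul_t, ← mul_assoc]; ring_nf

lemma normal_form {n : ℤ} (g : BS n) :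
    ∃ (i j : ℕ) (k : ℤ), g = t n ^ i * x n ^ k * (t n)⁻¹ ^ j := by
  induction g using induction with
  | h1 => exact ⟨0, 0, 0, by simp⟩
  | hx e g ih =>
    obtain ⟨i, j, k, rfl⟩ := ih
    refine ⟨i, j, n ^ i * e + k, ?_⟩
    rw [zpow_add, ← mul_assoc, ← mul_assoc, ← mul_assoc, zpow_mul_t_pow]
  | ht g ih =>
    obtain ⟨i, j, k, rfl⟩ := ih
    exact ⟨i + 1, j, k, by rw [pow_succ']; simp only [mul_assoc]⟩
  | ht' g ih =>
    obtain ⟨_ | i, j, k, rfl⟩ := ih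
    · refine ⟨0, j + 1, n * k, ?_⟩
      rw [pow_zero, one_mul, one_mul, ← mul_assoc, inv_t_mul_zpow, pow_succ', mul_assoc]
    · exact ⟨i, j, k, by rw [pow_succ']; group⟩

/-! ### The affine action on `ℚ` -/

/-- The exponent sum of `t`. -/
def expT (n : ℤ) : BS n →* Multiplicative ℤ := lift n 1 (.ofAdd 1) (by simp)

/-- The affine action of `BS(1,n)` on `ℚ`: `x` is `z ↦ z + 1` and `t` is `z ↦ z / n`
(division rather than multiplication because the relation is `t⁻¹ x t = xⁿ`). -/
def toPerm (n : ℕ) (hn : (n : ℚ) ≠ 0) : BS n →* Equiv.Perm ℚ :=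
  lift n (Equiv.addRight 1) (Equiv.mulRight₀ (n : ℚ)⁻¹ (inv_ne_zero hn)) (by
    ext z
    simp [Equiv.Perm.inv_def, add_mul, hn])

variable {n : ℕ} (hn : (n : ℚ) ≠ 0)

@[simp] lemma toPerm_x_zpow (k : ℤ) (z : ℚ) : toPerm n hn (x n ^ k) z = z + k := by
  simp [toPerm]

@[simp] lemma toPerm_t (z : ℚ) : toPerm n hn (t n) z = z * (n : ℚ)⁻¹ := by
  simp [toPerm]

@[simp] lemma toPerm_inv_t (z : ℚ) : toPerm n hn (t n)⁻¹ z = z * n := by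
  simp [toPerm, Equiv.Perm.inv_def]

lemma toPerm_t_pow (i : ℕ) (z : ℚ) : toPerm n hn (t n ^ i) z = z * ((n : ℚ) ^ i)⁻¹ := by
  induction i with
  | zero => simp
  | succ i ih =>
    rw [pow_succ', map_mul, Equiv.Perm.mul_apply, ih, toPerm_t, pow_succ, mul_inv, mul_assoc]

lemma toPerm_inv_t_pow (i : ℕ) (z : ℚ) : toPerm n hn ((t n)⁻¹ ^ i) z = z * (n : ℚ) ^ i := by
  induction i with
  | zero => simp
  | succ i ih =>
    rw [pow_succ', map_mul, Equiv.Perm.mul_apply, ih, toPerm_inv_t, pow_succ, mul_assoc]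

lemma toPerm_injective (h1 : 1 < n) : Function.Injective (toPerm n hn) := by
  rw [injective_iff_map_eq_one]
  intro g hg
  obtain ⟨i, j, k, rfl⟩ := normal_form g
  have key : ∀ z : ℚ, (z * (n : ℚ) ^ j + k) * ((n : ℚ) ^ i)⁻¹ = z := by
    intro z
    have := congrArg (fun f : Equiv.Perm ℚ => f z) hg
    simpa only [map_mul, Equiv.Perm.mul_apply, toPerm_t_pow, toPerm_inv_t_pow, toPerm_x_zpow,
      Equiv.Perm.one_apply] using this
  have hk : k = 0 := by
    have := key 0
    simpa [hn] using this
  subst hk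
  have hij : j = i := by
    have := key 1
    have hni : (n : ℚ) ^ i ≠ 0 := pow_ne_zero _ hn
    have h2 : (n : ℚ) ^ j = (n : ℚ) ^ i := by field_simp at this; simpa using this
    exact Nat.pow_right_injective h1 (by exact_mod_cast h2)
  subst hij
  simp

/-- Every element acts by an affine map whose slope is determined by the exponent sum of `t`. -/
lemma toPerm_affine (g : BS n) :
    ∃ c : ℚ, ∀ z, toPerm n hn g z = (n : ℚ) ^ (-(expT n g).toAdd) * z + c := by
  induction g using induction with
  | h1 => exact ⟨0, by simp⟩
  | hx e g ih =>
    obtain ⟨c, hc⟩ := ih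
    refine ⟨c + e, fun z => ?_⟩
    rw [map_mul, Equiv.Perm.mul_apply, toPerm_x_zpow, hc]
    simp [expT, add_assoc]
  | ht g ih =>
    obtain ⟨c, hc⟩ := ih
    refine ⟨c * (n : ℚ)⁻¹, fun z => ?_⟩
    rw [map_mul, Equiv.Perm.mul_apply, toPerm_t, hc]
    have : (expT n (t n * g)).toAdd = 1 + (expT n g).toAdd := by simp [expT]
    rw [this, neg_add, zpow_add₀ hn, zpow_neg_one]
    ring
  | ht' g ih =>
    obtain ⟨c, hc⟩ := ih
    refine ⟨c * n, fun z => ?_⟩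
    rw [map_mul, Equiv.Perm.mul_apply, toPerm_inv_t, hc]
    have : (expT n ((t n)⁻¹ * g)).toAdd = -1 + (expT n g).toAdd := by simp [expT]
    rw [this, neg_add, neg_neg, zpow_add₀ hn, zpow_one]
    ring

/-! ### Homomorphisms between the factors -/

lemma zpow_ne_of_coprime {m : ℕ} (hn1 : 1 < n) (hm1 : 1 < m) (h : n.Coprime m) (j : ℤ) :
    (n : ℚ) ^ j ≠ m := by
  intro hj
  have hn : (n : ℚ) ≠ 0 := by positivity
  obtain ⟨i, rfl | rfl⟩ := j.eq_nat_or_neg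
  · have h2 : n ^ i = m := by exact_mod_cast hj
    have h3 : Nat.Coprime m m := by
      have := h.pow_left i
      rwa [h2] at this
    rw [Nat.coprime_self] at h3
    omega
  · rw [zpow_neg, zpow_natCast] at hj
    have h2 : m * n ^ i = 1 := by
      have : (m : ℚ) * (n : ℚ) ^ i = 1 := by rw [← hj]; exact inv_mul_cancel₀ (pow_ne_zero _ hn)
      exact_mod_cast this
    have := Nat.eq_one_of_mul_eq_one_right h2
    omega

/-- The relation of `BS(1,m)` has no solution in `BS(1,n)` with nontrivial `y`, because conjugation
in `BS(1,n)` rescales translations only by powers of `n`. -/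
lemma eq_one_of_conj_eq_pow {m : ℕ} (hn1 : 1 < n) (hm1 : 1 < m) (h : n.Coprime m)
    (y s : BS n) (hys : s⁻¹ * y * s = y ^ (m : ℤ)) : y = 1 := by
  have hn : (n : ℚ) ≠ 0 := by positivity
  -- The slope of `y` is `1`: conjugation preserves the exponent sum, and `m ≠ 1`.
  have hy0 : (expT n y).toAdd = 0 := by
    have h1 := congrArg (fun g => (expT n g).toAdd) hys
    simp only [map_mul, map_inv, map_zpow, toAdd_mul, toAdd_inv, toAdd_zpow, smul_eq_mul] at h1
    have hm : ((m : ℤ) - 1) * (expT n y).toAdd = 0 := by linarith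
    rcases mul_eq_zero.mp hm with h2 | h2
    · omega
    · exact h2
  obtain ⟨c, hc⟩ := toPerm_affine hn y
  obtain ⟨d, hd⟩ := toPerm_affine hn s
  simp only [hy0, neg_zero, zpow_zero, one_mul] at hc
  have hyc : toPerm n hn y = Equiv.addRight c := by ext z; simp [hc]
  have hcomm : y * s = s * y ^ (m : ℤ) := by rw [← hys]; group
  have h2 := congrArg (fun g => toPerm n hn g 0) hcomm
  simp only [map_mul, hyc, Equiv.Perm.mul_apply, hd, mul_zero, zero_add, Equiv.coe_addRight,
    zpow_natCast, map_pow, Equiv.nsmul_addRight, nsmul_eq_mul] at h2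
  set σ := (expT n s).toAdd with hσ
  have h3 : c * ((n : ℚ) ^ σ - m) = 0 := by
    have h4 : c = (n : ℚ) ^ (-σ) * (m * c) := by
      linarith
    have h5 : (n : ℚ) ^ σ * (n : ℚ) ^ (-σ) = 1 := by
      rw [← zpow_add₀ hn]; simp
    linear_combination (n : ℚ) ^ σ * h4 + m * c * h5
  have hc0 : c = 0 := by
    rcases mul_eq_zero.mp h3 with h4 | h4
    · exact h4
    · exact absurd (sub_eq_zero.mp h4) (zpow_ne_of_coprime hn1 hm1 h σ)
  apply toPerm_injective hn hn1
  rw [hyc, hc0, map_one]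
  ext z; simp

/-- `BS(1,n)` has trivial centre. -/
lemma eq_one_of_comm (hn1 : 1 < n) (g : BS n) (hg : ∀ a, g * a = a * g) : g = 1 := by
  have hn : (n : ℚ) ≠ 0 := by positivity
  obtain ⟨c, hc⟩ := toPerm_affine hn g
  set A := (n : ℚ) ^ (-(expT n g).toAdd)
  have hA : A = 1 := by
    have h := congrArg (fun g => toPerm n hn g 0) (hg (x n ^ (1 : ℤ)))
    simp only [map_mul, Equiv.Perm.mul_apply, toPerm_x_zpow, hc] at h
    push_cast at h
    linarith
  have hc0 : c = 0 := by
    have h := congrArg (fun g => toPerm n hn g 0) (hg (t n))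
    simp only [map_mul, Equiv.Perm.mul_apply, toPerm_t, hc] at h
    have hn2 : (n : ℚ) ≠ 1 := by exact_mod_cast hn1.ne'
    have h2 : c * ((n : ℚ) - 1) = 0 := by
      field_simp at h
      linarith
    rcases mul_eq_zero.mp h2 with h4 | h4
    · exact h4
    · exact absurd (sub_eq_zero.mp h4) hn2
  apply toPerm_injective hn hn1
  ext z
  simp [hc, hA, hc0]

/-- The mixed component `BS(1,m) → BS(1,n)` of an automorphism of the product is trivial. -/
lemma mixed_eq_one {m : ℕ} (hn1 : 1 < n) (hm1 : 1 < m) (h : n.Coprime m)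
    (e : BS n × BS m ≃* BS n × BS m) (b : BS m) : (e (1, b)).1 = 1 := by
  let β : BS m →* BS n :=
    (MonoidHom.fst _ _).comp (e.toMonoidHom.comp (MonoidHom.inr (BS n) (BS m)))
  let α : BS n →* BS n :=
    (MonoidHom.fst _ _).comp (e.toMonoidHom.comp (MonoidHom.inl (BS n) (BS m)))
  have hβx : β (x m) = 1 := by
    apply eq_one_of_conj_eq_pow hn1 hm1 h _ (β (t m))
    rw [← map_inv, ← map_mul, ← map_mul, rel, map_zpow]
  have hαβ : ∀ a b, α a * β b = (e (a, b)).1 := by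
    intro a b
    change (e (a, 1)).1 * (e (1, b)).1 = _
    rw [← Prod.fst_mul, ← map_mul]; simp
  have hβα : ∀ a b, β b * α a = (e (a, b)).1 := by
    intro a b
    change (e (1, b)).1 * (e (a, 1)).1 = _
    rw [← Prod.fst_mul, ← map_mul]; simp
  have hββ : ∀ b, β (t m) * β b = β b * β (t m) := by
    -- Conjugation by `β t` fixes `β` on the generators, since `β x = 1`.
    have hconj : (MulAut.conj (β (t m))).toMonoidHom.comp β = β :=
      hom_ext (by simp [hβx]) (by simp)
    intro b
    have := DFunLike.congr_fun hconj b
    simp only [MonoidHom.comp_apply, MulEquiv.coe_toMonoidHom, MulAut.conj_apply] at this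
    exact mul_inv_eq_iff_eq_mul.mp this
  have hβt : β (t m) = 1 := by
    apply eq_one_of_comm hn1
    intro g
    obtain ⟨⟨a, b⟩, hab⟩ := e.surjective (g, 1)
    have hg : g = α a * β b := by rw [hαβ, hab]
    rw [hg, ← mul_assoc, hβα, ← hαβ, mul_assoc, hββ, mul_assoc]
  have hβ : β = 1 := hom_ext (by simpa using hβx) (by simpa using hβt)
  exact DFunLike.congr_fun hβ b

lemma mixed_eq_one' {m : ℕ} (hn1 : 1 < n) (hm1 : 1 < m) (h : n.Coprime m)
    (e : BS n × BS m ≃* BS n × BS m) (a : BS n) : (e (a, 1)).2 = 1 :=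
  mixed_eq_one hm1 hn1 h.symm ((MulEquiv.prodComm.trans e).trans MulEquiv.prodComm) a

end BS

/-- An automorphism of a product which, together with its inverse, has trivial mixed components
is diagonal. -/
lemma exists_prodCongr_eq {G H : Type*} [Group G] [Group H] (e : G × H ≃* G × H)
    (h1 : ∀ b, (e (1, b)).1 = 1) (h2 : ∀ a, (e (a, 1)).2 = 1)
    (h1' : ∀ b, (e.symm (1, b)).1 = 1) (h2' : ∀ a, (e.symm (a, 1)).2 = 1) :
    ∃ (f : MulAut G) (g : MulAut H), MulEquiv.prodCongr f g = e := by
  have hG : ∀ a, e (a, 1) = ((e (a, 1)).1, 1) := fun a => Prod.ext rfl (h2 a)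
  have hG' : ∀ a, e.symm (a, 1) = ((e.symm (a, 1)).1, 1) := fun a => Prod.ext rfl (h2' a)
  have hH : ∀ b, e (1, b) = (1, (e (1, b)).2) := fun b => Prod.ext (h1 b) rfl
  have hH' : ∀ b, e.symm (1, b) = (1, (e.symm (1, b)).2) := fun b => Prod.ext (h1' b) rfl
  refine ⟨
    { toFun := fun a => (e (a, 1)).1
      invFun := fun a => (e.symm (a, 1)).1
      left_inv := fun a => by simp only [← hG, e.symm_apply_apply]
      right_inv := fun a => by simp only [← hG', e.apply_symm_apply]
      map_mul' := fun a b => by rw [← Prod.fst_mul, ← map_mul]; simp },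
    { toFun := fun a => (e (1, a)).2
      invFun := fun a => (e.symm (1, a)).2
      left_inv := fun a => by simp only [← hH, e.symm_apply_apply]
      right_inv := fun a => by simp only [← hH', e.apply_symm_apply]
      map_mul' := fun a b => by rw [← Prod.snd_mul, ← map_mul]; simp }, ?_⟩
  ext1 ⟨a, b⟩
  have hab : e (a, b) = e (a, 1) * e (1, b) := by rw [← map_mul]; simp
  rw [hab, hG, hH]
  simp [MulEquiv.prodCongr]

/-- For distinct primes `p₁, p₂, q₁, q₂`, the automorphism group of
`BS(1, p₁q₁) × BS(1, p₂q₂)` is isomorphic to `Aut(BS(1, p₁q₁)) × Aut(BS(1, p₂q₂))`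
via the map sending a pair of automorphisms to their product; equivalently, every
automorphism of the direct product preserves each of the two direct factors. -/
theorem aut_prod_BS_of_distinct_primes
    (p₁ p₂ q₁ q₂ : ℕ) (hp₁ : p₁.Prime) (hp₂ : p₂.Prime) (hq₁ : q₁.Prime)
    (hq₂ : q₂.Prime) (h12 : p₁ ≠ p₂) (h1q1 : p₁ ≠ q₁) (h1q2 : p₁ ≠ q₂)
    (h2q1 : p₂ ≠ q₁) (h2q2 : p₂ ≠ q₂) (hq12 : q₁ ≠ q₂) :
    Function.Bijective
      (fun fg : MulAut (BS (p₁ * q₁ : ℕ)) × MulAut (BS (p₂ * q₂ : ℕ)) =>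
        (MulEquiv.prodCongr fg.1 fg.2 :
          MulAut (BS (p₁ * q₁ : ℕ) × BS (p₂ * q₂ : ℕ)))) := by
  constructor
  · rintro ⟨f, g⟩ ⟨f', g'⟩ hfg
    have key : ∀ a b, (f a, g b) = (f' a, g' b) := fun a b => DFunLike.congr_fun hfg (a, b)
    refine Prod.ext ?_ ?_
    · ext a; exact congrArg Prod.fst (key a 1)
    · ext b; exact congrArg Prod.snd (key 1 b)
  · intro e
    have hn : 1 < p₁ * q₁ := Nat.one_lt_mul_iff.mpr ⟨hp₁.pos, hq₁.pos, .inl hp₁.one_lt⟩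
    have hm : 1 < p₂ * q₂ := Nat.one_lt_mul_iff.mpr ⟨hp₂.pos, hq₂.pos, .inl hp₂.one_lt⟩
    have h : (p₁ * q₁).Coprime (p₂ * q₂) :=
      Nat.Coprime.mul_left
        (Nat.Coprime.mul_right ((Nat.coprime_primes hp₁ hp₂).mpr h12)
          ((Nat.coprime_primes hp₁ hq₂).mpr h1q2))
        (Nat.Coprime.mul_right ((Nat.coprime_primes hq₁ hp₂).mpr h2q1.symm)
          ((Nat.coprime_primes hq₁ hq₂).mpr hq12))
    obtain ⟨f, g, hfg⟩ := exists_prodCongr_eq e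
      (BS.mixed_eq_one hn hm h e) (BS.mixed_eq_one' hn hm h e)
      (BS.mixed_eq_one hn hm h e.symm) (BS.mixed_eq_one' hn hm h e.symm)
    exact ⟨(f, g), hfg⟩
end
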